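/- Let n ≥ 1 and let f, h : ℝ^{2n+1} → ℝ^{2n+1} be diffeomorphisms, each connected to the identity by a smooth path of diffeomorphisms. Then there exists a positive smooth path of diffeomorphisms (g_t)_{t∈[0,1]} of ℝ^{2n+1} with g_0 = f and g_1 = h. -/

import Mathlib

open Set Function

noncomputable section

/-- `ℝ^{2n+1}` with coordinates `(x, y, z) ∈ ℝⁿ × ℝⁿ × ℝ`. -/
abbrev E (n : ℕ) : Type := (Fin n → ℝ) × (Fin n → ℝ) × ℝ

/-- The standard contact form `α₀ = dz + ∑ xᵢ dyᵢ`: at the point `p = (x,y,z)` it sends the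
vector `v = (u,w,c)` to `c + ∑ xᵢ wᵢ`. -/
def α₀ (n : ℕ) (p v : E n) : ℝ := v.2.2 + ∑ i, p.1 i * v.2.1 i

/-- A diffeomorphism of `ℝ^{2n+1}`: a smooth bijection with smooth inverse. -/
def IsDiffeo (n : ℕ) (f : E n → E n) : Prop :=
  ContDiff ℝ (⊤ : ℕ∞) f ∧ ∃ g : E n → E n, ContDiff ℝ (⊤ : ℕ∞) g ∧ LeftInverse g f ∧ RightInverse g f

/-- A smooth path of diffeomorphisms, parametrized by `t ∈ [0,1]` (smoothly extended to `ℝ`):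
a smooth map such that `g_t := g(t,·)` is a diffeomorphism for every `t ∈ [0,1]`. -/
def IsSmoothPath (n : ℕ) (g : ℝ × E n → E n) : Prop :=
  ContDiff ℝ (⊤ : ℕ∞) g ∧ ∀ t ∈ Icc (0:ℝ) 1, IsDiffeo n (fun p => g (t, p))

/-- The time derivative `∂ₜ g(t,q)` of a path. -/
def pathDeriv (n : ℕ) (g : ℝ × E n → E n) (t : ℝ) (q : E n) : E n :=
  deriv (fun s => g (s, q)) t

/-- A path is positive if `α₀(g(t,q))(∂ₜ g(t,q)) > 0` for all `t ∈ [0,1]` and all `q`. -/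
def IsPositivePath (n : ℕ) (g : ℝ × E n → E n) : Prop :=
  ∀ t ∈ Icc (0:ℝ) 1, ∀ q, 0 < α₀ n (g (t, q)) (pathDeriv n g t q)

/-- A path is null if `α₀(g(t,q))(∂ₜ g(t,q)) = 0` for all `t ∈ [0,1]` and all `q`. -/
def IsNullPath (n : ℕ) (g : ℝ × E n → E n) : Prop :=
  ∀ t ∈ Icc (0:ℝ) 1, ∀ q, α₀ n (g (t, q)) (pathDeriv n g t q) = 0

/-- A path is compactly supported if all `g(t,·)` are the identity outside a fixed compact set. -/
def IsCompactlySupportedPath (n : ℕ) (g : ℝ × E n → E n) : Prop :=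
  ∃ K : Set (E n), IsCompact K ∧ ∀ t ∈ Icc (0:ℝ) 1, ∀ p ∉ K, g (t, p) = p

/-- `f` is connected to the identity by a smooth path of diffeomorphisms. -/
def ConnToId (n : ℕ) (f : E n → E n) : Prop :=
  ∃ g : ℝ × E n → E n, IsSmoothPath n g ∧ (∀ p, g (0, p) = p) ∧ (∀ p, g (1, p) = f p)

/-- `f` is connected to the identity by a compactly supported smooth path of diffeomorphisms. -/
def ConnToIdCompactlySupported (n : ℕ) (f : E n → E n) : Prop :=
  ∃ g : ℝ × E n → E n, IsSmoothPath n g ∧ IsCompactlySupportedPath n g ∧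
    (∀ p, g (0, p) = p) ∧ (∀ p, g (1, p) = f p)

section Part1
lemma cutoff_exists {n : ℕ} {s t : Set (E n)} (hs : IsClosed s) (ht : IsClosed t)
    (hd : Disjoint s t) : ∃ χ : E n → ℝ, ContDiff ℝ (⊤ : ℕ∞) χ ∧ (∀ p ∈ s, χ p = 0) ∧
      (∀ p ∈ t, χ p = 1) := by
  obtain ⟨f, h0, h1, -⟩ := exists_contMDiffMap_zero_one_of_isClosed
    (n := (⊤ : ℕ∞)) (modelWithCornersSelf ℝ (E n)) hs ht hd
  exact ⟨f, f.contMDiff.contDiff, fun p hp => h0 hp, fun p hp => h1 hp⟩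

lemma pert_inv {V : Type*} [NormedAddCommGroup V] [NormedSpace ℝ V] [CompleteSpace V]
    [Nontrivial V] {w : V → V} (hw : ContDiff ℝ (⊤ : ℕ∞) w)
    (hb : ∀ p, ‖fderiv ℝ w p‖ ≤ 1/2) :
    ∃ Ψ : V → V, ContDiff ℝ (⊤ : ℕ∞) Ψ ∧ LeftInverse Ψ (fun p => p + w p) ∧
      RightInverse Ψ (fun p => p + w p) ∧ ∀ p, ‖fderiv ℝ Ψ p‖ ≤ 2 := by
  have hdiff : Differentiable ℝ w := hw.differentiable (by simp)
  have hlip : ∀ p q, ‖w p - w q‖ ≤ 1/2 * ‖p - q‖ := fun p q =>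
    convex_univ.norm_image_sub_le_of_norm_fderiv_le (fun x _ => hdiff x)
      (fun x _ => hb x) (mem_univ q) (mem_univ p)
  set f : V → V := fun p => p + w p with hf
  have happ : ApproximatesLinearOn f ((ContinuousLinearEquiv.refl ℝ (V) : V ≃L[ℝ] V) : V →L[ℝ] V) univ (1/2 : NNReal) := by
    intro p _ q _
    have := hlip p q
    simp only [hf]
    have e : p + w p - (q + w q) - ((ContinuousLinearEquiv.refl ℝ (V) : V ≃L[ℝ] V) : V →L[ℝ] V) (p - q) = w p - w q := by
      simp; abel
    rw [e]; simpa using this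
  have hc : Subsingleton (V) ∨ (1/2 : NNReal) < ‖((ContinuousLinearEquiv.refl ℝ (V)).symm : V →L[ℝ] V)‖₊⁻¹ := by
    right
    have : ‖((ContinuousLinearEquiv.refl ℝ (V)).symm : V →L[ℝ] V)‖₊ = 1 := by
      simp
    rw [this]; norm_num
  let e := happ.toHomeomorph f hc
  have hunit : ∀ p, ∃ u : V ≃L[ℝ] V, HasFDerivAt f (u : V →L[ℝ] V) p := by
    intro p
    have h1 : ‖-fderiv ℝ w p‖ < 1 := by rw [norm_neg]; linarith [hb p]
    let u := Units.oneSub (-fderiv ℝ w p) h1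
    refine ⟨ContinuousLinearEquiv.unitsEquiv ℝ (V) u, ?_⟩
    have := (hasFDerivAt_id p).add (hdiff p).hasFDerivAt
    refine this.congr_fderiv ?_
    ext v
    change _ = ((u : V →L[ℝ] V)) v
    simp [u]
  choose u hu using hunit
  have hsm : ContDiff ℝ (⊤ : ℕ∞) e.symm := e.contDiff_symm hu (contDiff_id.add hw)
  refine ⟨e.symm, hsm, fun p => e.symm_apply_apply p, fun p => e.apply_symm_apply p, ?_⟩
  have hl2 : LipschitzWith 2 e.symm := by
    refine LipschitzWith.of_dist_le_mul fun a b => ?_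
    obtain ⟨p, rfl⟩ := e.surjective a
    obtain ⟨q, rfl⟩ := e.surjective b
    rw [e.symm_apply_apply, e.symm_apply_apply, dist_eq_norm, dist_eq_norm]
    have h1 := hlip p q
    have h2 : e p - e q = (p - q) + (w p - w q) := by
      change p + w p - (q + w q) = _; abel
    have h3 : ‖p - q‖ ≤ ‖e p - e q‖ + ‖w p - w q‖ := by
      rw [h2]; calc ‖p - q‖ = ‖((p - q) + (w p - w q)) - (w p - w q)‖ := by congr 1; abel
        _ ≤ _ := norm_sub_le _ _
    simp; linarith
  intro p
  simpa using norm_fderiv_le_of_lipschitz ℝ hl2 (x₀ := p)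

lemma pert_diffeo {n : ℕ} {w : E n → E n} (hw : ContDiff ℝ (⊤ : ℕ∞) w)
    (hb : ∀ p, ‖fderiv ℝ w p‖ ≤ 1/2) : IsDiffeo n (fun p => p + w p) := by
  obtain ⟨Ψ, h1, h2, h3, -⟩ := pert_inv hw hb
  exact ⟨contDiff_id.add hw, Ψ, h1, h2, h3⟩

lemma IsDiffeo.comp {n : ℕ} {f g : E n → E n} (hf : IsDiffeo n f) (hg : IsDiffeo n g) :
    IsDiffeo n (fun p => f (g p)) := by
  obtain ⟨h1, f', h2, h3, h4⟩ := hf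
  obtain ⟨k1, g', k2, k3, k4⟩ := hg
  exact ⟨h1.comp k1, fun p => g' (f' p), k2.comp h2, fun p => by simp [h3 (g p), k3 p],
    fun p => by simp [k4 (f' p), h4 p]⟩

lemma IsDiffeo.id' {n : ℕ} : IsDiffeo n (fun p => p) :=
  ⟨contDiff_id, fun p => p, contDiff_id, fun _ => rfl, fun _ => rfl⟩

/-- Diffeos reachable from the identity by a null path supported in `L`. -/
def NullTo (n : ℕ) (L : Set (E n)) (h : E n → E n) : Prop :=
  ∃ g : ℝ → E n → E n, ContDiff ℝ (⊤ : ℕ∞) (fun q : ℝ × E n => g q.1 q.2) ∧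
    (∀ t, IsDiffeo n (g t)) ∧ (∀ t p, α₀ n (g t p) (deriv (fun s => g s p) t) = 0) ∧
    (∀ t, t ≤ 0 → ∀ p, g t p = p) ∧ (∀ t, 1 ≤ t → ∀ p, g t p = h p) ∧
    (∀ t, ∀ p, p ∉ L → g t p = p)

lemma alpha_smul {n : ℕ} (p v : E n) (c : ℝ) : α₀ n p (c • v) = c * α₀ n p v := by
  simp [α₀, mul_add, Finset.mul_sum]
  exact Finset.sum_congr rfl fun i _ => by ring

lemma alpha_zero {n : ℕ} (p : E n) : α₀ n p 0 = 0 := by simp [α₀]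

lemma NullTo.id' {n : ℕ} (L : Set (E n)) : NullTo n L (fun p => p) :=
  ⟨fun _ p => p, contDiff_snd, fun _ => IsDiffeo.id', fun t p => by simp [alpha_zero],
    fun _ _ _ => rfl, fun _ _ _ => rfl, fun _ _ _ => rfl⟩

lemma deriv_scale {V : Type*} [NormedAddCommGroup V] [NormedSpace ℝ V] (k : ℝ → V) (a b t : ℝ) :
    deriv (fun s => k (a * s - b)) t = a • deriv k (a * t - b) := by
  have h := deriv_comp_mul_left a (fun r => k (r - b)) t
  rw [deriv_comp_sub_const] at h
  exact h

lemma NullTo.comp {n : ℕ} {L : Set (E n)} {h k : E n → E n} (hk : NullTo n L k)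
    (hh : NullTo n L h) : NullTo n L (fun p => k (h p)) := by
  obtain ⟨g, g1, g2, g3, g4, g5, g6⟩ := hh
  obtain ⟨j, j1, j2, j3, j4, j5, j6⟩ := hk
  refine ⟨fun t p => j (3 * t - 2) (g (3 * t - 0) p), ?_, fun t => (j2 _).comp (g2 _), ?_, ?_, ?_, ?_⟩
  · have : ContDiff ℝ (⊤ : ℕ∞) (fun q : ℝ × E n => ((3 * q.1 - 2 : ℝ), g (3 * q.1 - 0) q.2)) := by
      have : ContDiff ℝ (⊤ : ℕ∞) (fun q : ℝ × E n => ((3 * q.1 - 0 : ℝ), q.2)) := by fun_prop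
      have := g1.comp this
      exact ContDiff.prodMk (by fun_prop) this
    exact j1.comp this
  · intro t p
    rcases lt_or_ge t (1/2) with ht | ht
    · have e : (fun s => j (3 * s - 2) (g (3 * s - 0) p)) =ᶠ[nhds t] fun s => g (3 * s - 0) p := by
        filter_upwards [eventually_lt_nhds ht] with s hs
        exact j4 _ (by linarith) _
      rw [e.deriv_eq, deriv_scale (fun s => g s p), alpha_smul]
      simp only
      rw [j4 _ (by linarith) _, g3, mul_zero]
    · have e : (fun s => j (3 * s - 2) (g (3 * s - 0) p)) =ᶠ[nhds t] fun s => j (3 * s - 2) (h p) := by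
        filter_upwards [eventually_gt_nhds (show (1/3:ℝ) < t by linarith)] with s hs
        rw [g5 _ (by linarith)]
      rw [e.deriv_eq, deriv_scale (fun s => j s (h p)), alpha_smul]
      simp only
      rw [g5 _ (by linarith) _, j3, mul_zero]
  · intro t ht p
    simp only
    rw [j4 _ (by linarith), g4 _ (by linarith)]
  · intro t ht p
    simp only
    rw [j5 _ (by linarith), g5 _ (by linarith)]
  · intro t p hp
    simp only
    rw [g6 _ _ hp, j6 _ _ hp]

end Part1

section Part2
/-- Smooth, supported in `L`, `C¹`-bounded by `ε`. -/
structure Sm {V F : Type*} [NormedAddCommGroup V] [NormedSpace ℝ V] [NormedAddCommGroup F]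
    [NormedSpace ℝ F] (L : Set V) (ε : ℝ) (f : V → F) : Prop where
  smooth : ContDiff ℝ (⊤ : ℕ∞) f
  off : ∀ p, p ∉ L → f p = 0
  bd : ∀ p, ‖f p‖ ≤ ε
  dbd : ∀ p, ‖fderiv ℝ f p‖ ≤ ε

namespace Sm
variable {V F G : Type*} [NormedAddCommGroup V] [NormedSpace ℝ V] [NormedAddCommGroup F]
    [NormedSpace ℝ F] [NormedAddCommGroup G] [NormedSpace ℝ G] {L K : Set V} {ε δ : ℝ} {f g : V → F}

lemma diff (h : Sm L ε f) : Differentiable ℝ f := h.smooth.differentiable (by simp)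

lemma mono (h : Sm K ε f) (hKL : K ⊆ L) (he : ε ≤ δ) : Sm L δ f :=
  ⟨h.smooth, fun p hp => h.off p fun hk => hp (hKL hk), fun p => (h.bd p).trans he,
    fun p => (h.dbd p).trans he⟩

lemma add (h : Sm L ε f) (k : Sm L δ g) : Sm L (ε + δ) (fun p => f p + g p) := by
  refine ⟨h.smooth.add k.smooth, fun p hp => by simp [h.off p hp, k.off p hp],
    fun p => (norm_add_le _ _).trans (add_le_add (h.bd p) (k.bd p)), fun p => ?_⟩
  rw [fderiv_fun_add (h.diff p) (k.diff p)]
  exact (norm_add_le _ _).trans (add_le_add (h.dbd p) (k.dbd p))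

lemma neg (h : Sm L ε f) : Sm L ε (fun p => - f p) := by
  refine ⟨h.smooth.neg, fun p hp => by simp [h.off p hp], fun p => by simpa using h.bd p,
    fun p => ?_⟩
  rw [fderiv_fun_neg, norm_neg]; exact h.dbd p

lemma clm (h : Sm L ε f) (A : F →L[ℝ] G) {c : ℝ} (hA : ‖A‖ ≤ c) :
    Sm L (c * ε) (fun p => A (f p)) := by
  have hc : 0 ≤ c := (norm_nonneg _).trans hA
  refine ⟨A.contDiff.comp h.smooth, fun p hp => by simp [h.off p hp], fun p => ?_, fun p => ?_⟩
  · exact (A.le_opNorm _).trans (mul_le_mul hA (h.bd p) (norm_nonneg _) hc)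
  · have := (A.hasFDerivAt.comp p (h.diff p).hasFDerivAt).fderiv
    change fderiv ℝ (fun p => A (f p)) p = _ at this
    rw [this]
    exact (ContinuousLinearMap.opNorm_comp_le _ _).trans
      (mul_le_mul hA (h.dbd p) (norm_nonneg _) hc)

lemma comp (h : Sm L ε f) {Ψ : V → V} (hΨ : ContDiff ℝ (⊤ : ℕ∞) Ψ) (hb : ∀ p, ‖fderiv ℝ Ψ p‖ ≤ 2)
    (ho : ∀ p, p ∉ L → Ψ p = p) : Sm L (2 * ε) (fun p => f (Ψ p)) := by
  refine ⟨h.smooth.comp hΨ, fun p hp => by rw [ho p hp, h.off p hp], fun p => ?_, fun p => ?_⟩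
  · have := (norm_nonneg _).trans (h.bd p)
    linarith [h.bd (Ψ p)]
  · have := ((h.diff (Ψ p)).hasFDerivAt.comp p (hΨ.differentiable (by simp) p).hasFDerivAt).fderiv
    change fderiv ℝ (fun p => f (Ψ p)) p = _ at this
    rw [this, mul_comm]
    exact (ContinuousLinearMap.opNorm_comp_le _ _).trans
      (mul_le_mul (h.dbd _) (hb p) (norm_nonneg _) ((norm_nonneg _).trans (h.dbd p)))

lemma inv [CompleteSpace V] [Nontrivial V] {w : V → V} (h : Sm L ε w) (he : ε ≤ 1/2) :
    ∃ Ψ : V → V, ContDiff ℝ (⊤ : ℕ∞) Ψ ∧ (∀ p, Ψ (p + w p) = p) ∧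
      (∀ p, Ψ p + w (Ψ p) = p) ∧ (∀ p, ‖fderiv ℝ Ψ p‖ ≤ 2) ∧ ∀ p, p ∉ L → Ψ p = p := by
  obtain ⟨Ψ, h1, h2, h3, h4⟩ := pert_inv h.smooth fun p => (h.dbd p).trans he
  refine ⟨Ψ, h1, h2, h3, h4, fun p hp => ?_⟩
  have := h2 p
  simpa [h.off p hp] using this

lemma of_cpt (hL : IsCompact L) (hs : ContDiff ℝ (⊤ : ℕ∞) f) (ho : ∀ p, p ∉ L → f p = 0) :
    ∃ M, Sm L M f := by
  have hdc : Continuous (fderiv ℝ f) := hs.continuous_fderiv (by simp)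
  obtain ⟨M1, h1⟩ := hL.exists_bound_of_continuousOn hs.continuous.continuousOn
  obtain ⟨M2, h2⟩ := hL.exists_bound_of_continuousOn hdc.continuousOn
  have hoD : ∀ p, p ∉ L → fderiv ℝ f p = 0 := by
    intro p hp
    have : f =ᶠ[nhds p] fun _ => 0 := by
      filter_upwards [hL.isClosed.isOpen_compl.mem_nhds hp] with q hq using ho q hq
    rw [this.fderiv_eq]; simp
  refine ⟨max 0 (max M1 M2), hs, ho, fun p => ?_, fun p => ?_⟩
  · by_cases hp : p ∈ L
    · exact (h1 p hp).trans (by simp)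
    · rw [ho p hp]; simp
  · by_cases hp : p ∈ L
    · exact (h2 p hp).trans (by simp)
    · rw [hoD p hp]; simp

lemma nonneg (h : Sm L ε f) : 0 ≤ ε := (norm_nonneg _).trans (h.bd 0)

end Sm

variable {n : ℕ}

def Xm (a : E n → (Fin n → ℝ)) (p : E n) : E n := (a p, 0, 0)
def dotx (s : E n → (Fin n → ℝ)) (p : E n) : ℝ := ∑ i, p.1 i * s p i
def Ym (s : E n → (Fin n → ℝ)) (p : E n) : E n := (0, s p, - dotx s p)

lemma Sm.xm {L : Set (E n)} {ε : ℝ} {a : E n → (Fin n → ℝ)} (h : Sm L ε a) : Sm L ε (Xm a) := by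
  have := h.clm (ContinuousLinearMap.inl ℝ (Fin n → ℝ) ((Fin n → ℝ) × ℝ))
    (ContinuousLinearMap.norm_inl_le_one _ _ _)
  rw [one_mul] at this
  exact this

lemma Sm.dotx {L : Set (E n)} {ε R : ℝ} {s : E n → (Fin n → ℝ)} (h : Sm L ε s)
    (hL : IsClosed L) (hR : ∀ p ∈ L, ‖p‖ ≤ R) (hR0 : 0 ≤ R) :
    Sm L (n * (R + 1) * ε) (dotx s) := by
  have e0 := h.nonneg
  have hx : ∀ p ∈ L, ∀ i, ‖p.1 i‖ ≤ R := fun p hp i =>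
    (norm_le_pi_norm p.1 i).trans ((norm_fst_le p).trans (hR p hp))
  have ho : ∀ p, p ∉ L → _root_.dotx s p = 0 := fun p hp => by simp [_root_.dotx, h.off p hp]
  have hsm : ∀ i, ContDiff ℝ (⊤ : ℕ∞) (fun p => s p i) := fun i => by
    have := h.smooth; fun_prop
  have hsi : ∀ i, Sm L ε (fun p => s p i) := fun i => by
    have := h.clm (ContinuousLinearMap.proj (R := ℝ) (φ := fun _ : Fin n => ℝ) i) (c := 1)
      (ContinuousLinearMap.opNorm_le_bound _ zero_le_one fun x => by
        simpa using norm_le_pi_norm x i)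
    simpa using this
  refine ⟨?_, ho, fun p => ?_, fun p => ?_⟩
  · unfold _root_.dotx
    refine ContDiff.sum fun i _ => ?_
    have := hsm i
    have h2 : ContDiff ℝ (⊤ : ℕ∞) (fun p : E n => p.1 i) := by fun_prop
    exact h2.mul this
  · by_cases hp : p ∈ L
    · calc ‖_root_.dotx s p‖ ≤ ∑ i : Fin n, R * ε := by
            refine norm_sum_le_of_le _ fun i _ => ?_
            rw [norm_mul]
            exact mul_le_mul (hx p hp i) ((hsi i).bd p) (norm_nonneg _) hR0
        _ = n * R * ε := by simp [mul_assoc]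
        _ ≤ _ := by
          have : (0:ℝ) ≤ n := Nat.cast_nonneg n
          have : 0 ≤ n * ε := mul_nonneg this e0
          nlinarith
    · rw [ho p hp, norm_zero]; positivity
  · by_cases hp : p ∈ L
    · let pr : Fin n → (E n →L[ℝ] ℝ) := fun i =>
        (ContinuousLinearMap.proj (R := ℝ) (φ := fun _ : Fin n => ℝ) i).comp
          (ContinuousLinearMap.fst ℝ (Fin n → ℝ) ((Fin n → ℝ) × ℝ))
      have hpr : ∀ i, ‖pr i‖ ≤ 1 := fun i =>
        ContinuousLinearMap.opNorm_le_bound _ zero_le_one fun x => by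
          simpa [pr] using (norm_le_pi_norm x.1 i).trans (norm_fst_le x)
      have hd : HasFDerivAt (_root_.dotx s)
          (∑ i, (p.1 i • fderiv ℝ (fun p => s p i) p + s p i • pr i)) p := by
        unfold _root_.dotx
        refine HasFDerivAt.fun_sum fun i _ => ?_
        exact HasFDerivAt.mul (pr i).hasFDerivAt ((hsi i).diff p).hasFDerivAt
      rw [hd.fderiv]
      calc _ ≤ ∑ i : Fin n, (R * ε + ε * 1) := by
            refine norm_sum_le_of_le _ fun i _ => ?_
            refine (norm_add_le _ _).trans (add_le_add ?_ ?_)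
            · rw [norm_smul]
              exact mul_le_mul (hx p hp i) ((hsi i).dbd p) (norm_nonneg _) hR0
            · rw [norm_smul]
              exact mul_le_mul ((hsi i).bd p) (hpr i) (norm_nonneg _) e0
        _ = _ := by simp; ring
    · have : _root_.dotx s =ᶠ[nhds p] fun _ => 0 := by
        filter_upwards [hL.isOpen_compl.mem_nhds hp] with q hq using ho q hq
      rw [this.fderiv_eq]; simp; positivity

lemma Sm.ym {L : Set (E n)} {ε R : ℝ} {s : E n → (Fin n → ℝ)} (h : Sm L ε s)
    (hL : IsClosed L) (hR : ∀ p ∈ L, ‖p‖ ≤ R) (hR0 : 0 ≤ R) :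
    Sm L ((1 + n * (R + 1)) * ε) (Ym s) := by
  have hr := ContinuousLinearMap.norm_inr_le_one ℝ (Fin n → ℝ) ((Fin n → ℝ) × ℝ)
  have h1 := (h.clm (ContinuousLinearMap.inl ℝ (Fin n → ℝ) ℝ)
    (ContinuousLinearMap.norm_inl_le_one _ _ _)).clm _ hr
  have h2 := ((h.dotx hL hR hR0).neg.clm (ContinuousLinearMap.inr ℝ (Fin n → ℝ) ℝ)
    (ContinuousLinearMap.norm_inr_le_one _ _ _)).clm _ hr
  have h3 := h1.add h2
  have e : Ym s = fun p => (ContinuousLinearMap.inr ℝ (Fin n → ℝ) ((Fin n → ℝ) × ℝ))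
      ((ContinuousLinearMap.inl ℝ (Fin n → ℝ) ℝ) (s p)) +
      (ContinuousLinearMap.inr ℝ (Fin n → ℝ) ((Fin n → ℝ) × ℝ))
      ((ContinuousLinearMap.inr ℝ (Fin n → ℝ) ℝ) (-_root_.dotx s p)) := by
    funext p; simp [Ym]
  rw [e]
  exact h3.mono subset_rfl (by linarith)

lemma move_null {L : Set (E n)} {ε : ℝ} {w : E n → E n} (h : Sm L ε w) (he : ε ≤ 1/2)
    (hn : ∀ p (τ : ℝ), α₀ n (p + τ • w p) (w p) = 0) : NullTo n L (fun p => p + w p) := by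
  refine ⟨fun t p => p + Real.smoothTransition t • w p, ?_, fun t => ?_, fun t p => ?_,
    fun t ht p => ?_, fun t ht p => ?_, fun t p hp => ?_⟩
  · have h1 : ContDiff ℝ (⊤ : ℕ∞) (fun q : ℝ × E n => Real.smoothTransition q.1) :=
      Real.smoothTransition.contDiff.comp contDiff_fst
    have h2 : ContDiff ℝ (⊤ : ℕ∞) (fun q : ℝ × E n => w q.2) := h.smooth.comp contDiff_snd
    exact contDiff_snd.add (h1.smul h2)
  · refine pert_diffeo (w := fun p => Real.smoothTransition t • w p)
      (contDiff_const (c := Real.smoothTransition t) |>.smul h.smooth :) fun p => ?_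
    have := (h.diff p).hasFDerivAt.const_smul (Real.smoothTransition t)
    have := this.fderiv
    change fderiv ℝ (fun p => Real.smoothTransition t • w p) p = _ at this
    rw [this, norm_smul, Real.norm_of_nonneg (Real.smoothTransition.nonneg t)]
    have h1 := Real.smoothTransition.le_one t
    have h2 := (h.dbd p).trans he
    have h3 := norm_nonneg (fderiv ℝ w p)
    have h4 := Real.smoothTransition.nonneg t
    nlinarith
  · have hd : HasDerivAt Real.smoothTransition (deriv Real.smoothTransition t) t :=
      ((Real.smoothTransition.contDiff (n := 1)).differentiable (by simp) t).hasDerivAt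
    have := ((hd.smul_const (w p)).const_add p).deriv
    change deriv (fun s => p + Real.smoothTransition s • w p) t = _ at this
    rw [this, alpha_smul, hn, mul_zero]
  · simp [Real.smoothTransition.zero_of_nonpos ht]
  · simp [Real.smoothTransition.one_of_one_le ht]
  · simp [h.off p hp]

lemma xm_null {L : Set (E n)} {ε : ℝ} {a : E n → (Fin n → ℝ)} (h : Sm L ε (Xm a))
    (he : ε ≤ 1/2) : NullTo n L (fun p => p + Xm a p) :=
  move_null h he fun p τ => by simp [α₀, Xm]

lemma ym_null {L : Set (E n)} {ε : ℝ} {s : E n → (Fin n → ℝ)} (h : Sm L ε (Ym s))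
    (he : ε ≤ 1/2) : NullTo n L (fun p => p + Ym s p) :=
  move_null h he fun p τ => by simp [α₀, Ym, dotx]

end Part2

section Part3
variable {n : ℕ}

lemma zm_null (hn : 1 ≤ n) {K L : Set (E n)} (hL : IsClosed L) {R : ℝ} (hR : ∀ p ∈ L, ‖p‖ ≤ R)
    (hR0 : 0 ≤ R) (hKL : K ⊆ L) {χ : E n → ℝ} {M : ℝ} (hχ : Sm L M χ) (h1 : ∀ p ∈ K, χ p = 1) :
    ∃ η : ℝ, 0 < η ∧ ∀ u : E n → ℝ, Sm K η u →
      NullTo n L (fun p => p + ((0 : Fin n → ℝ), (0 : Fin n → ℝ), u p)) := by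
  have hM := hχ.nonneg
  obtain ⟨C, hC⟩ : ∃ C : ℝ, C = 1 + n * (R + 1) := ⟨_, rfl⟩
  have hC1 : 1 ≤ C := by rw [hC]; have : (0:ℝ) ≤ n * (R + 1) := by positivity
                         linarith
  obtain ⟨c, hc⟩ : ∃ c : ℝ, c = 1 / (8 * (M + 1)) := ⟨_, rfl⟩
  have hc0 : 0 < c := by rw [hc]; positivity
  have hcM : c * M ≤ 1/8 := by
    rw [hc, div_mul_eq_mul_div, div_le_div_iff₀ (by positivity) (by positivity)]; linarith
  refine ⟨c / (16 * C), by positivity, fun u hu => ?_⟩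
  let i0 : Fin n := ⟨0, hn⟩
  -- embedding of ℝ as the i0 coordinate
  let A : ℝ →L[ℝ] (Fin n → ℝ) := ContinuousLinearMap.single ℝ (fun _ : Fin n => ℝ) i0
  have hAv : ∀ r, A r = Pi.single i0 r := fun r => rfl
  have hA : ‖A‖ ≤ 1 := ContinuousLinearMap.opNorm_le_bound _ zero_le_one fun r => by
    rw [hAv, one_mul]
    refine (pi_norm_le_iff_of_nonneg (norm_nonneg _)).2 fun j => ?_
    by_cases hj : j = i0
    · subst hj; simp
    · simp [hj]
  have hcA : ‖c • A‖ ≤ c := by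
    rw [norm_smul, Real.norm_of_nonneg hc0.le]; nlinarith
  have hcA' : ‖(-c⁻¹) • A‖ ≤ c⁻¹ := by
    rw [norm_smul, norm_neg, Real.norm_of_nonneg (by positivity)]
    have : 0 < c⁻¹ := by positivity
    nlinarith
  let a : E n → (Fin n → ℝ) := fun p => (c • A) (χ p)
  let s : E n → (Fin n → ℝ) := fun p => ((-c⁻¹) • A) (u p)
  have ha : Sm L (1/8) a := (hχ.clm _ hcA).mono subset_rfl hcM
  have hs : Sm L (1 / (16 * C)) s := (hu.clm _ hcA').mono hKL (by
    rw [← mul_div_assoc, inv_mul_cancel₀ hc0.ne'])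
  have hCs : C * (8 * (1 / (16 * C))) ≤ 1/2 := by
    have : C ≠ 0 := by positivity
    apply le_of_eq; field_simp; norm_num
  have hpos : 0 < 1 / (16 * C) := by positivity
  -- S1
  have S1 := ha.xm
  obtain ⟨Φ1, f1, l1, r1, b1, o1⟩ := S1.inv (by norm_num)
  have s1 := hs.comp f1 b1 o1
  have B1 := s1.ym hL hR hR0
  rw [← hC] at B1
  obtain ⟨Φ2, f2, l2, r2, b2, o2⟩ := B1.inv (by nlinarith)
  have a2 := ((ha.comp f1 b1 o1).comp f2 b2 o2).neg
  have S2 := a2.xm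
  obtain ⟨Φ3, f3, l3, r3, b3, o3⟩ := S2.inv (by norm_num)
  have s2 := ((s1.comp f2 b2 o2).comp f3 b3 o3).neg
  have B2 := s2.ym hL hR hR0
  rw [← hC] at B2
  have N := (ym_null B2 (by linarith)).comp ((xm_null S2 (by norm_num)).comp
    ((ym_null B1 (by nlinarith)).comp (xm_null S1 (by norm_num))))
  convert N using 2 with p
  -- computation
  set q1 := p + Xm a p with hq1
  have e1 : Φ1 q1 = p := l1 p
  set q2 := q1 + Ym (fun p => s (Φ1 p)) q1 with hq2
  have e2 : Φ2 q2 = q1 := l2 q1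
  set q3 := q2 + Xm (fun p => -a (Φ1 (Φ2 p))) q2 with hq3
  have e3 : Φ3 q3 = q2 := l3 q2
  have v1 : q1 = (p.1 + a p, p.2.1, p.2.2) := by rw [hq1]; simp [Xm, Prod.ext_iff]
  have v2 : q2 = (p.1 + a p, p.2.1 + s p, p.2.2 - ∑ i, (p.1 i + a p i) * s p i) := by
    rw [hq2]; simp only [Ym, dotx, e1]; rw [v1]; simp [Prod.ext_iff, sub_eq_add_neg]
  have v3 : q3 = (p.1, p.2.1 + s p, p.2.2 - ∑ i, (p.1 i + a p i) * s p i) := by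
    rw [hq3]; simp only [Xm, e2, e1]; rw [v2]; simp [Prod.ext_iff]
  have v4 : ∑ i, a p i * s p i = - u p := by
    have : ∀ i, a p i * s p i = if i = i0 then - (χ p * u p) else 0 := by
      intro i
      simp only [a, s, _root_.smul_apply, hAv, Pi.smul_apply, smul_eq_mul]
      by_cases hi : i = i0
      · subst hi; simp; field_simp
      · simp [hi]
    simp only [this, Finset.sum_ite_eq', Finset.mem_univ, if_true]
    by_cases hp : p ∈ K
    · rw [h1 p hp]; ring
    · rw [hu.off p hp]; ring
  simp only [Ym, dotx, e3, e2, e1]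
  rw [v3]
  simp only [add_mul, Finset.sum_add_distrib, v4]
  simp [Prod.ext_iff]
  ring

lemma small_null (hn : 1 ≤ n) {K L : Set (E n)} (hK : IsClosed K) (hL : IsCompact L)
    (hKL : K ⊆ interior L) :
    ∃ ε : ℝ, 0 < ε ∧ ∀ v : E n → E n, Sm K ε v → NullTo n L (fun p => p + v p) := by
  have hKL' : K ⊆ L := hKL.trans interior_subset
  obtain ⟨χ, c1, c2, c3⟩ := cutoff_exists (isOpen_interior (s := L)).isClosed_compl hK
    (disjoint_left.2 fun p hp hk => hp (hKL hk))
  obtain ⟨M, hχ⟩ := Sm.of_cpt hL c1 fun p hp => c2 p fun h => hp (interior_subset h)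
  obtain ⟨R0, hR0⟩ := hL.isBounded.exists_norm_le
  obtain ⟨R, hR⟩ : ∃ R, R = max R0 0 := ⟨_, rfl⟩
  have hRL : ∀ p ∈ L, ‖p‖ ≤ R := fun p hp => (hR0 p hp).trans (by rw [hR]; exact le_max_left _ _)
  have hRn : 0 ≤ R := by rw [hR]; exact le_max_right _ _
  have hRK : ∀ p ∈ K, ‖p‖ ≤ R := fun p hp => hRL p (hKL' hp)
  obtain ⟨η, hη, Hz⟩ := zm_null hn hL.isClosed hRL hRn hKL' hχ c3
  obtain ⟨C, hC⟩ : ∃ C : ℝ, C = 1 + n * (R + 1) := ⟨_, rfl⟩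
  have hC0 : 0 ≤ n * (R + 1) := by positivity
  have hC1 : 1 ≤ C := by rw [hC]; linarith
  refine ⟨min (η / (4 * C)) (1 / (4 * C)), by positivity, fun v hv => ?_⟩
  obtain ⟨ε, hε⟩ : ∃ ε, ε = min (η / (4 * C)) (1 / (4 * C)) := ⟨_, rfl⟩
  rw [← hε] at hv
  have e1 : 4 * C * ε ≤ η := by
    have : ε ≤ η / (4 * C) := by rw [hε]; exact min_le_left _ _
    rw [le_div_iff₀ (by positivity)] at this; linarith
  have e2 : 4 * C * ε ≤ 1 := by
    have : ε ≤ 1 / (4 * C) := by rw [hε]; exact min_le_right _ _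
    rw [le_div_iff₀ (by positivity)] at this; linarith
  have e0 := hv.nonneg
  have hε1 : ε ≤ C * ε := by nlinarith
  have vx : Sm K ε (fun p => (v p).1) := by
    have := hv.clm (ContinuousLinearMap.fst ℝ (Fin n → ℝ) ((Fin n → ℝ) × ℝ))
      (ContinuousLinearMap.norm_fst_le _ _ _)
    rw [one_mul] at this; exact this
  have vr : Sm K ε (fun p => (v p).2) := by
    have := hv.clm (ContinuousLinearMap.snd ℝ (Fin n → ℝ) ((Fin n → ℝ) × ℝ))
      (ContinuousLinearMap.norm_snd_le _ _ _)
    rw [one_mul] at this; exact this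
  have vy : Sm K ε (fun p => (v p).2.1) := by
    have := vr.clm (ContinuousLinearMap.fst ℝ (Fin n → ℝ) ℝ)
      (ContinuousLinearMap.norm_fst_le _ _ _)
    rw [one_mul] at this; exact this
  have vz : Sm K ε (fun p => (v p).2.2) := by
    have := vr.clm (ContinuousLinearMap.snd ℝ (Fin n → ℝ) ℝ)
      (ContinuousLinearMap.norm_snd_le _ _ _)
    rw [one_mul] at this; exact this
  have A := vx.xm
  obtain ⟨Φ1, f1, l1, r1, b1, o1⟩ := A.inv (by linarith)
  have vy' := vy.comp f1 b1 o1
  have B := vy'.ym hK hRK hRn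
  rw [← hC] at B
  obtain ⟨Φ2, f2, l2, r2, b2, o2⟩ := B.inv (by linarith)
  have U := ((vz.comp f1 b1 o1).add (vy'.dotx hK hRK hRn)).comp f2 b2 o2
  have U' := U.mono subset_rfl (show _ ≤ η by
    refine le_trans (le_of_eq ?_) e1
    rw [hC]; ring)
  have N := (Hz _ U').comp ((ym_null (B.mono hKL' le_rfl) (by linarith)).comp
    (xm_null (A.mono hKL' le_rfl) (by linarith)))
  convert N using 2 with p
  set q1 := p + Xm (fun p => (v p).1) p with hq1
  have e1 : Φ1 q1 = p := l1 p
  set q2 := q1 + Ym (fun p => (v (Φ1 p)).2.1) q1 with hq2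
  have e2 : Φ2 q2 = q1 := l2 q1
  rw [e2, e1, hq2]
  simp only [Ym, dotx, e1]
  rw [hq1]
  simp [Xm, Prod.ext_iff]
  ring

end Part3

section Part4
/-- A `C¹`-continuous path of diffeomorphisms `F`, with inverses `G`. -/
structure CIso {V : Type*} [NormedAddCommGroup V] [NormedSpace ℝ V] (F G : ℝ → V → V) : Prop where
  sm : ∀ t, ContDiff ℝ (⊤ : ℕ∞) (F t)
  smi : ∀ t, ContDiff ℝ (⊤ : ℕ∞) (G t)
  li : ∀ t p, G t (F t p) = p
  ri : ∀ t p, F t (G t p) = p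
  cont : Continuous (fun q : ℝ × V => F q.1 q.2)
  dcont : Continuous (fun q : ℝ × V => fderiv ℝ (F q.1) q.2)

namespace CIso
variable {V : Type*} [NormedAddCommGroup V] [NormedSpace ℝ V]
variable {F G F' G' : ℝ → V → V}

lemma diff (h : CIso F G) (t : ℝ) : Differentiable ℝ (F t) := (h.sm t).differentiable (by simp)
lemma diffi (h : CIso F G) (t : ℝ) : Differentiable ℝ (G t) := (h.smi t).differentiable (by simp)

lemma comp (h : CIso F G) (k : CIso F' G') :
    CIso (fun t p => F t (F' t p)) (fun t p => G' t (G t p)) := by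
  refine ⟨fun t => (h.sm t).comp (k.sm t), fun t => (k.smi t).comp (h.smi t),
    fun t p => by rw [h.li, k.li], fun t p => by rw [k.ri, h.ri], ?_, ?_⟩
  · exact h.cont.comp (continuous_fst.prodMk k.cont)
  · have : (fun q : ℝ × V => fderiv ℝ (fun p => F q.1 (F' q.1 p)) q.2) =
      fun q => (fderiv ℝ (F q.1) (F' q.1 q.2)).comp (fderiv ℝ (F' q.1) q.2) := by
      funext q
      exact fderiv_comp q.2 (h.diff _ _) (k.diff _ _)
    rw [this]
    have h1 : Continuous fun q : ℝ × V => fderiv ℝ (F q.1) (F' q.1 q.2) :=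
      h.dcont.comp (continuous_fst.prodMk k.cont)
    exact h1.clm_comp k.dcont

lemma reparam (h : CIso F G) {c : ℝ → ℝ} (hc : Continuous c) :
    CIso (fun t => F (c t)) (fun t => G (c t)) :=
  ⟨fun _ => h.sm _, fun _ => h.smi _, fun _ => h.li _, fun _ => h.ri _,
    h.cont.comp ((hc.comp continuous_fst).prodMk continuous_snd),
    h.dcont.comp ((hc.comp continuous_fst).prodMk continuous_snd)⟩

lemma const {f g : V → V} (hf : ContDiff ℝ (⊤ : ℕ∞) f) (hg : ContDiff ℝ (⊤ : ℕ∞) g)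
    (h1 : ∀ p, g (f p) = p) (h2 : ∀ p, f (g p) = p) : CIso (fun _ => f) (fun _ => g) :=
  ⟨fun _ => hf, fun _ => hg, fun _ => h1, fun _ => h2, hf.continuous.comp continuous_snd,
    (hf.continuous_fderiv (by simp)).comp continuous_snd⟩

lemma id' : CIso (fun _ (p : V) => p) (fun _ p => p) :=
  const contDiff_id contDiff_id (fun _ => rfl) (fun _ => rfl)

lemma dcomp (h : CIso F G) (t : ℝ) (p : V) :
    (fderiv ℝ (G t) (F t p)).comp (fderiv ℝ (F t) p) = ContinuousLinearMap.id ℝ V := by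
  rw [← fderiv_comp p (h.diffi _ _) (h.diff _ _)]
  have : G t ∘ F t = id := funext (h.li t)
  rw [this, fderiv_id]

lemma dcompi (h : CIso F G) (t : ℝ) (p : V) :
    (fderiv ℝ (F t) p).comp (fderiv ℝ (G t) (F t p)) = ContinuousLinearMap.id ℝ V := by
  have h1 : fderiv ℝ (F t) p = fderiv ℝ (F t) (G t (F t p)) := by rw [h.li]
  rw [h1, ← fderiv_comp _ (h.diff _ _) (h.diffi _ _)]
  have : F t ∘ G t = id := funext (h.ri t)
  rw [this, fderiv_id]

/-- The derivative as an equivalence. -/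
def eqv (h : CIso F G) (t : ℝ) (p : V) : V ≃L[ℝ] V :=
  ContinuousLinearEquiv.equivOfInverse (fderiv ℝ (F t) p) (fderiv ℝ (G t) (F t p))
    (fun x => by simpa using congrArg (fun A => A x) (h.dcomp t p))
    (fun x => by simpa using congrArg (fun A => A x) (h.dcompi t p))

lemma eqv_coe (h : CIso F G) (t : ℝ) (p : V) : (h.eqv t p : V →L[ℝ] V) = fderiv ℝ (F t) p := rfl

lemma eqv_symm (h : CIso F G) (t : ℝ) (p : V) :
    ((h.eqv t p).symm : V →L[ℝ] V) = fderiv ℝ (G t) (F t p) := rfl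

lemma conti [CompleteSpace V] (h : CIso F G) : Continuous (fun q : ℝ × V => G q.1 q.2) := by
  rw [continuous_iff_continuousAt]
  rintro ⟨t0, q0⟩
  rw [Metric.continuousAt_iff]
  intro ε hε
  obtain ⟨p0, hp0⟩ : ∃ p, p = G t0 q0 := ⟨_, rfl⟩
  have hFp : F t0 p0 = q0 := by rw [hp0, h.ri]
  obtain ⟨A, hA⟩ : ∃ A, A = h.eqv t0 p0 := ⟨_, rfl⟩
  obtain ⟨N, hN⟩ : ∃ N, N = A.toNonlinearRightInverse := ⟨_, rfl⟩
  obtain ⟨m, ⟨hm0, hm⟩ | hm⟩ : ∃ m : NNReal, 0 < m ∧ 0 < (N.nnnorm : ℝ)⁻¹ - m ∨ 0 < m ∧ N.nnnorm = 0 := by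
    rcases eq_or_ne N.nnnorm 0 with h0 | h0
    · exact ⟨1, Or.inr ⟨one_pos, h0⟩⟩
    · refine ⟨N.nnnorm⁻¹ / 2, Or.inl ⟨by positivity, ?_⟩⟩
      have : 0 < (N.nnnorm : ℝ)⁻¹ := by positivity
      push_cast; linarith
  · have hd := Metric.continuousAt_iff.1 (h.dcont.continuousAt (x := (t0, p0))) m (by exact_mod_cast hm0)
    obtain ⟨δ, hδ, hd⟩ := hd
    obtain ⟨r, hr0, hrδ, hrε⟩ : ∃ r, 0 < r ∧ r < δ ∧ r < ε :=
      ⟨min δ ε / 2, by positivity, by linarith [min_le_left δ ε, lt_min hδ hε],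
        by linarith [min_le_right δ ε, lt_min hδ hε]⟩
    have happ : ∀ t, |t - t0| < δ →
        ApproximatesLinearOn (F t) (A : V →L[ℝ] V) (Metric.closedBall p0 r) m := by
      intro t ht x hx y hy
      refine Convex.norm_image_sub_le_of_norm_fderiv_le' (fun x _ => h.diff t x) (fun x hx => ?_)
        (convex_closedBall p0 r) hy hx
      have := hd (x := (t, x)) (by
        rw [Prod.dist_eq, max_lt_iff]; exact ⟨ht, lt_of_le_of_lt hx hrδ⟩)
      rw [dist_eq_norm] at this
      rw [hA, eqv_coe]; exact this.le
    obtain ⟨κ, hκ⟩ : ∃ κ, κ = ((N.nnnorm : ℝ)⁻¹ - m) * r := ⟨_, rfl⟩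
    have hκ0 : 0 < κ := by rw [hκ]; positivity
    have hc1 : Continuous fun q : ℝ × V => dist q.2 (F q.1 p0) :=
      continuous_snd.dist (h.cont.comp (continuous_fst.prodMk continuous_const))
    have hev : ∀ᶠ q in nhds (t0, q0), dist q.2 (F q.1 p0) < κ :=
      hc1.continuousAt.eventually_lt continuousAt_const (by simpa [hFp] using hκ0)
    have hev2 : ∀ᶠ q : ℝ × V in nhds (t0, q0), |q.1 - t0| < δ :=
      (continuous_fst.sub continuous_const).abs.continuousAt.eventually_lt continuousAt_const
        (by simpa using hδ)
    obtain ⟨η, hη, H⟩ := Metric.eventually_nhds_iff.1 (hev.and hev2)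
    refine ⟨η, hη, fun {q} hq => ?_⟩
    obtain ⟨a1, a2⟩ := H hq
    obtain ⟨p, hp, hpq⟩ := (happ q.1 a2).surjOn_closedBall_of_nonlinearRightInverse N hr0.le
      subset_rfl (a := q.2) (by rw [← hκ]; exact a1.le)
    have : G q.1 q.2 = p := by rw [← hpq, h.li]
    rw [this]
    show dist p (G t0 q0) < ε
    rw [← hp0]
    exact lt_of_le_of_lt hp hrε
  · -- degenerate case: the space is trivial
    have hz : ∀ x : V, x = 0 := by
      intro x
      have h1 := N.bound (x)
      have h2 := N.right_inv x
      rw [hm.2] at h1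
      have : N.toFun x = 0 := by simpa using h1
      have h3 : (A : V →L[ℝ] V) (N.toFun x) = x := h2
      rw [this] at h3; simpa using h3.symm
    exact ⟨1, one_pos, fun {q} _ => by rw [hz (G q.1 q.2), hz (G t0 q0)]; simpa using hε⟩

lemma symm [CompleteSpace V] (h : CIso F G) : CIso G F := by
  refine ⟨h.smi, h.sm, h.ri, h.li, h.conti, ?_⟩
  have e : (fun q : ℝ × V => fderiv ℝ (G q.1) q.2) =
      fun q => ContinuousLinearMap.inverse (fderiv ℝ (F q.1) (G q.1 q.2)) := by
    funext q
    rw [← h.eqv_coe, ContinuousLinearMap.inverse_equiv, eqv_symm, h.ri]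
  rw [e, continuous_iff_continuousAt]
  intro q
  have h1 : Continuous fun q : ℝ × V => fderiv ℝ (F q.1) (G q.1 q.2) :=
    h.dcont.comp (continuous_fst.prodMk h.conti)
  have h2 := (contDiffAt_map_inverse (𝕜 := ℝ) (n := 0) (h.eqv q.1 (G q.1 q.2))).continuousAt
  rw [eqv_coe] at h2
  exact h2.comp (f := fun q : ℝ × V => fderiv ℝ (F q.1) (G q.1 q.2)) (x := q) h1.continuousAt

lemma inj (h : CIso F G) (t : ℝ) {p q : V} (e : F t p = F t q) : p = q := by
  rw [← h.li t p, e, h.li]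

/-- Uniform closeness on compact sets. -/
lemma unif [CompleteSpace V] (h : CIso F G) {L : Set V} (hL : IsCompact L) {ε : ℝ} (hε : 0 < ε) :
    ∃ δ > 0, ∀ s ∈ Icc (0:ℝ) 1, ∀ t ∈ Icc (0:ℝ) 1, |s - t| ≤ δ → ∀ p ∈ L,
      ‖F s (G t p) - p‖ ≤ ε ∧ ‖fderiv ℝ (fun p => F s (G t p) - p) p‖ ≤ ε := by
  -- on the compact set `[0,1] × L` use uniform continuity
  have hc1 : Continuous fun q : ℝ × ℝ × V => F q.1 (G q.2.1 q.2.2) - q.2.2 :=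
    (h.cont.comp (continuous_fst.prodMk (h.conti.comp continuous_snd))).sub
      (continuous_snd.comp continuous_snd)
  have e : ∀ s t p, fderiv ℝ (fun p => F s (G t p) - p) p =
      (fderiv ℝ (F s) (G t p)).comp (fderiv ℝ (G t) p) - ContinuousLinearMap.id ℝ V := by
    intro s t p
    have hd : DifferentiableAt ℝ (fun p => F s (G t p)) p := (h.diff s _).comp p (h.diffi t p)
    rw [fderiv_fun_sub hd differentiableAt_fun_id, fderiv_fun_id]
    congr 1
    exact fderiv_comp p (h.diff _ _) (h.diffi _ _)
  have hc2 : Continuous fun q : ℝ × ℝ × V =>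
      (fderiv ℝ (F q.1) (G q.2.1 q.2.2)).comp (fderiv ℝ (G q.2.1) q.2.2)
        - ContinuousLinearMap.id ℝ V := by
    have a : Continuous fun q : ℝ × ℝ × V => fderiv ℝ (F q.1) (G q.2.1 q.2.2) :=
      h.dcont.comp (continuous_fst.prodMk (h.conti.comp continuous_snd))
    have b : Continuous fun q : ℝ × ℝ × V => fderiv ℝ (G q.2.1) q.2.2 :=
      h.symm.dcont.comp continuous_snd
    exact (a.clm_comp b).sub continuous_const
  have hc : Continuous fun q : ℝ × ℝ × V => max ‖F q.1 (G q.2.1 q.2.2) - q.2.2‖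
      ‖(fderiv ℝ (F q.1) (G q.2.1 q.2.2)).comp (fderiv ℝ (G q.2.1) q.2.2)
        - ContinuousLinearMap.id ℝ V‖ := hc1.norm.max hc2.norm
  have hK : IsCompact (Icc (0:ℝ) 1 ×ˢ Icc (0:ℝ) 1 ×ˢ L) :=
    isCompact_Icc.prod (isCompact_Icc.prod hL)
  have hu := hK.uniformContinuousOn_of_continuous hc.continuousOn
  obtain ⟨δ, hδ, H⟩ := Metric.uniformContinuousOn_iff.1 hu ε hε
  refine ⟨δ / 2, by positivity, fun s hs t ht hst p hp => ?_⟩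
  have := H (s, t, p) ⟨hs, ht, hp⟩ (t, t, p) ⟨ht, ht, hp⟩ (by
    rw [Prod.dist_eq]; simp only [dist_self]
    rw [max_lt_iff]; exact ⟨by rw [Real.dist_eq]; linarith, hδ⟩)
  have z1 : F t (G t p) - p = 0 := by rw [h.ri, sub_self]
  have z2 : (fderiv ℝ (F t) (G t p)).comp (fderiv ℝ (G t) p) - ContinuousLinearMap.id ℝ V = 0 := by
    rw [h.symm.dcomp, sub_self]
  simp only [z1, z2, norm_zero, max_self, dist_zero_right, Real.norm_eq_abs] at this
  have := (le_abs_self _).trans this.le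
  rw [max_le_iff] at this
  rw [e]; exact this

end CIso

end Part4

section Part5
variable {n : ℕ}

lemma exists_grid {δ : ℝ} (hδ : 0 < δ) : ∃ N : ℕ, 0 < (N : ℝ) ∧ 1 / (N : ℝ) ≤ δ := by
  obtain ⟨m, hm⟩ := exists_nat_one_div_lt hδ
  exact ⟨m + 1, by positivity, by push_cast; exact hm.le⟩

lemma csupp_null (hn : 1 ≤ n) {C D : ℝ → E n → E n} (h : CIso C D) (h0 : ∀ p, C 0 p = p)
    {K L : Set (E n)} (hK : IsClosed K) (hoff : ∀ t p, p ∉ K → C t p = p) (hL : IsCompact L)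
    (hKL : K ⊆ interior L) : NullTo n L (C 1) := by
  obtain ⟨ε, hε, H⟩ := small_null hn hK hL hKL
  obtain ⟨δ, hδ, hu⟩ := h.unif hL hε
  obtain ⟨N, hN, hNδ⟩ := exists_grid hδ
  have key : ∀ j : ℕ, j ≤ N → NullTo n L (C (j / N)) := by
    intro j
    induction j with
    | zero =>
      intro _
      have : C (((0 : ℕ) : ℝ) / N) = fun p => p := by funext p; simp [h0]
      rw [this]; exact NullTo.id' L
    | succ j ih =>
      intro hj
      have hj' : (j : ℝ) + 1 ≤ N := by exact_mod_cast hj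
      have hj0 : (0 : ℝ) ≤ j := by positivity
      obtain ⟨a, ha⟩ : ∃ a : ℝ, a = j / N := ⟨_, rfl⟩
      obtain ⟨b, hb⟩ : ∃ b : ℝ, b = (j + 1 : ℕ) / N := ⟨_, rfl⟩
      have hba : b - a = 1 / N := by rw [ha, hb]; push_cast; ring
      have ha' : a ∈ Icc (0:ℝ) 1 :=
        ⟨by rw [ha]; positivity, by rw [ha, div_le_one hN]; linarith⟩
      have hb' : b ∈ Icc (0:ℝ) 1 :=
        ⟨by rw [hb]; positivity, by rw [hb, div_le_one hN]; push_cast; linarith⟩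
      have hab : |b - a| ≤ δ := by rw [hba, abs_of_pos (by positivity)]; exact hNδ
      have ih' := ih (by omega)
      rw [← ha] at ih'
      rw [← hb]
      have hD : ∀ p, p ∉ K → D a p = p := fun p hp => by
        conv_lhs => rw [← hoff a p hp]
        exact h.li _ _
      have hv0 : ∀ p, p ∉ K → C b (D a p) - p = 0 := fun p hp => by
        rw [hD p hp, hoff b p hp, sub_self]
      have hv : Sm K ε (fun p => C b (D a p) - p) := by
        refine ⟨((h.sm b).comp (h.smi a)).sub contDiff_id, hv0, fun p => ?_, fun p => ?_⟩
        · by_cases hp : p ∈ K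
          · exact (hu b hb' a ha' hab p (interior_subset (hKL hp))).1
          · rw [hv0 p hp, norm_zero]; exact hε.le
        · by_cases hp : p ∈ K
          · exact (hu b hb' a ha' hab p (interior_subset (hKL hp))).2
          · have : (fun p => C b (D a p) - p) =ᶠ[nhds p] fun _ => 0 := by
              filter_upwards [hK.isOpen_compl.mem_nhds hp] with q hq using hv0 q hq
            rw [this.fderiv_eq]; simpa using hε.le
      have := (H _ hv).comp ih'
      convert this using 2 with p
      rw [h.li]; abel
  have := key N le_rfl
  rwa [div_self hN.ne'] at this

section abs
variable {V : Type*} [NormedAddCommGroup V] [NormedSpace ℝ V] [CompleteSpace V] [Nontrivial V]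

lemma pertIso {F G : ℝ → V → V} (h : CIso F G) {χ : V → ℝ} (hχ : ContDiff ℝ (⊤ : ℕ∞) χ) (a : ℝ)
    {c : ℝ → ℝ} (hc : Continuous c)
    (hb : ∀ t p, ‖fderiv ℝ (fun p => χ p • (F (c t) (G a p) - p)) p‖ ≤ 1 / 2) :
    ∃ E', CIso (fun t p => p + χ p • (F (c t) (G a p) - p)) E' := by
  have hsm : ∀ t, ContDiff ℝ (⊤ : ℕ∞) (fun p => χ p • (F (c t) (G a p) - p)) := fun t =>
    hχ.smul (((h.sm _).comp (h.smi a)).sub contDiff_id)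
  have := fun t => pert_inv (hsm t) (hb t)
  choose E' e1 e2 e3 _ using this
  have hd1 : ∀ t p, DifferentiableAt ℝ (fun p => F (c t) (G a p)) p := fun t p =>
    (h.diff _ _).comp p (h.diffi a p)
  have hχd : Differentiable ℝ χ := hχ.differentiable (by simp)
  refine ⟨E', fun t => contDiff_id.add (hsm t), e1, e2, e3, ?_, ?_⟩
  · have h1 : Continuous fun q : ℝ × V => F (c q.1) (G a q.2) :=
      h.cont.comp ((hc.comp continuous_fst).prodMk ((h.smi a).continuous.comp continuous_snd))
    exact continuous_snd.add ((hχ.continuous.comp continuous_snd).smul (h1.sub continuous_snd))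
  · have e : (fun q : ℝ × V => fderiv ℝ (fun p => p + χ p • (F (c q.1) (G a p) - p)) q.2) =
      fun q => ContinuousLinearMap.id ℝ V + (χ q.2 • ((fderiv ℝ (F (c q.1)) (G a q.2)).comp
        (fderiv ℝ (G a) q.2) - ContinuousLinearMap.id ℝ V) +
          (fderiv ℝ χ q.2).smulRight (F (c q.1) (G a q.2) - q.2)) := by
      funext q
      rw [fderiv_fun_add differentiableAt_fun_id (((hsm q.1).differentiable (by simp)) _),
        fderiv_fun_id, fderiv_fun_smul (hχd _) ((hd1 _ _).fun_sub differentiableAt_fun_id),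
        fderiv_fun_sub (hd1 _ _) differentiableAt_fun_id, fderiv_fun_id]
      congr 4
      exact fderiv_comp _ (h.diff _ _) (h.diffi _ _)
    rw [e]
    have h1 : Continuous fun q : ℝ × V => F (c q.1) (G a q.2) :=
      h.cont.comp ((hc.comp continuous_fst).prodMk ((h.smi a).continuous.comp continuous_snd))
    have h2 : Continuous fun q : ℝ × V => fderiv ℝ (F (c q.1)) (G a q.2) :=
      h.dcont.comp ((hc.comp continuous_fst).prodMk ((h.smi a).continuous.comp continuous_snd))
    have h3 : Continuous fun q : ℝ × V => fderiv ℝ (G a) q.2 :=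
      ((h.smi a).continuous_fderiv (by simp)).comp continuous_snd
    have h4 : Continuous fun q : ℝ × V => fderiv ℝ χ q.2 :=
      (hχ.continuous_fderiv (by simp)).comp continuous_snd
    have h5 : Continuous fun q : ℝ × V => χ q.2 := hχ.continuous.comp continuous_snd
    have h6 : Continuous fun q : ℝ × V =>
        (fderiv ℝ χ q.2).smulRight (F (c q.1) (G a q.2) - q.2) := by
      have := (ContinuousLinearMap.smulRightL ℝ V V).continuous₂
      exact this.comp (h4.prodMk (h1.sub continuous_snd))
    exact continuous_const.add ((h5.smul ((h2.clm_comp h3).sub continuous_const)).add h6)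

/-- Bounding the derivative of the cut-off perturbation. -/
lemma pert_bound {χ : V → ℝ} {L : Set V} {M ε : ℝ} (hχ : Sm L M χ) (hL : IsClosed L) {u : V → V}
    (hu : Differentiable ℝ u) (h1 : ∀ p ∈ L, ‖u p‖ ≤ ε) (h2 : ∀ p ∈ L, ‖fderiv ℝ u p‖ ≤ ε)
    (hε : M * ε ≤ 1 / 4) (p : V) : ‖fderiv ℝ (fun p => χ p • u p) p‖ ≤ 1 / 2 := by
  by_cases hp : p ∈ L
  · rw [fderiv_fun_smul (hχ.diff p) (hu p)]
    have a1 : ‖χ p • fderiv ℝ u p‖ ≤ M * ε := by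
      rw [norm_smul]
      exact mul_le_mul (hχ.bd p) (h2 p hp) (norm_nonneg _) hχ.nonneg
    have a2 : ‖(fderiv ℝ χ p).smulRight (u p)‖ ≤ M * ε := by
      rw [ContinuousLinearMap.norm_smulRight_apply]
      exact mul_le_mul (hχ.dbd p) (h1 p hp) (norm_nonneg _) hχ.nonneg
    exact (norm_add_le _ _).trans (by linarith)
  · have : (fun p => χ p • u p) =ᶠ[nhds p] fun _ => 0 := by
      filter_upwards [hL.isOpen_compl.mem_nhds hp] with q hq
      rw [hχ.off q hq, zero_smul]
    rw [this.fderiv_eq]; simp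
end abs

lemma frag {F G : ℝ → E n → E n} (h : CIso F G) (h0 : ∀ p, F 0 p = p) {K U : Set (E n)}
    (hK : IsCompact K) (hU : IsOpen U) (hKU : ∀ t ∈ Icc (0:ℝ) 1, ∀ p ∈ K, F t p ∈ U) :
    ∃ B B', CIso B B' ∧ (∀ p, B 0 p = p) ∧ (∀ t ∈ Icc (0:ℝ) 1, ∀ p ∈ K, B t p = F t p) ∧
      ∃ L, IsCompact L ∧ L ⊆ U ∧ ∀ t p, p ∉ L → B t p = p := by
  obtain ⟨M, hM⟩ : ∃ M, M = (fun q : ℝ × E n => F q.1 q.2) '' (Icc (0:ℝ) 1 ×ˢ K) := ⟨_, rfl⟩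
  have hMc : IsCompact M := by rw [hM]; exact (isCompact_Icc.prod hK).image h.cont
  have hMF : ∀ t ∈ Icc (0:ℝ) 1, ∀ p ∈ K, F t p ∈ M := fun t ht p hp => by
    rw [hM]; exact ⟨(t, p), ⟨ht, hp⟩, rfl⟩
  have hMU : M ⊆ U := by
    rw [hM]; rintro _ ⟨⟨t, p⟩, ⟨ht, hp⟩, rfl⟩; exact hKU t ht p hp
  obtain ⟨L, hL, hML, hLU⟩ := exists_compact_between hMc hU hMU
  obtain ⟨χ, c1, c2, c3⟩ := cutoff_exists (isOpen_interior (s := L)).isClosed_compl hMc.isClosed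
    (disjoint_left.2 fun p hp hk => hp (hML hk))
  obtain ⟨C, hχ⟩ := Sm.of_cpt hL c1 fun p hp => c2 p fun h => hp (interior_subset h)
  have hC := hχ.nonneg
  obtain ⟨ε, hε⟩ : ∃ ε, ε = 1 / (4 * (C + 1)) := ⟨_, rfl⟩
  have hε0 : 0 < ε := by rw [hε]; positivity
  have hCε : C * ε ≤ 1 / 4 := by
    rw [hε, mul_one_div, div_le_iff₀ (by positivity)]; linarith
  obtain ⟨δ, hδ, hu⟩ := h.unif hL hε0
  obtain ⟨N, hN, hNδ⟩ := exists_grid hδ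
  have key : ∀ j : ℕ, j ≤ N → ∃ B B', CIso B B' ∧ (∀ p, B 0 p = p) ∧
      (∀ t ∈ Icc (0:ℝ) 1, ∀ p ∈ K, B t p = F (min t (j / N)) p) ∧
      ∀ t p, p ∉ L → B t p = p := by
    intro j
    induction j with
    | zero =>
      intro _
      refine ⟨_, _, CIso.id', fun _ => rfl, fun t ht p hp => ?_, fun _ _ _ => rfl⟩
      simp [ht.1, h0]
    | succ j ih =>
      intro hj
      have hj' : (j : ℝ) + 1 ≤ N := by exact_mod_cast hj
      have hj0 : (0 : ℝ) ≤ j := by positivity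
      obtain ⟨a, ha⟩ : ∃ a : ℝ, a = j / N := ⟨_, rfl⟩
      obtain ⟨b, hb⟩ : ∃ b : ℝ, b = (j + 1 : ℕ) / N := ⟨_, rfl⟩
      have hba : b - a = 1 / N := by rw [ha, hb]; push_cast; ring
      have hab' : a ≤ b := by have : 0 < 1 / (N : ℝ) := by positivity
                              linarith
      have ha' : a ∈ Icc (0:ℝ) 1 :=
        ⟨by rw [ha]; positivity, by rw [ha, div_le_one hN]; linarith⟩
      have hb' : b ∈ Icc (0:ℝ) 1 :=
        ⟨by rw [hb]; positivity, by rw [hb, div_le_one hN]; push_cast; linarith⟩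
      obtain ⟨B, B', k1, k2, k3, k4⟩ := ih (by omega)
      rw [← ha] at k3
      rw [← hb]
      obtain ⟨c, hc⟩ : ∃ c : ℝ → ℝ, c = fun t => max a (min t b) := ⟨_, rfl⟩
      have hcc : Continuous c := by rw [hc]; fun_prop
      have hca : ∀ t, a ≤ c t := fun t => by rw [hc]; exact le_max_left _ _
      have hcb : ∀ t, c t ≤ b := fun t => by rw [hc]; exact max_le hab' (min_le_right _ _)
      obtain ⟨E', hE⟩ := pertIso h c1 a hcc (fun t => by
        have hct : c t ∈ Icc (0:ℝ) 1 := ⟨ha'.1.trans (hca t), (hcb t).trans hb'.2⟩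
        have hd : |c t - a| ≤ δ := by
          rw [abs_of_nonneg (by linarith [hca t])]; linarith [hcb t]
        exact pert_bound hχ hL.isClosed
          ((((h.sm (c t)).comp (h.smi a)).sub contDiff_id).differentiable (by simp))
          (fun p hp => (hu _ hct a ha' hd p hp).1) (fun p hp => (hu _ hct a ha' hd p hp).2) hCε)
      have hlow : ∀ t, t ≤ a → c t = a := fun t ht => by
        rw [hc]; exact max_eq_left ((min_le_left _ _).trans ht)
      refine ⟨_, _, hE.comp k1, fun p => ?_, fun t ht p hp => ?_, fun t p hp => ?_⟩
      · simp only [k2, hlow 0 ha'.1, h.ri, sub_self, smul_zero, add_zero]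
      · rw [k3 t ht p hp]
        rcases le_total t a with hta | hta
        · rw [hlow t hta, h.ri, sub_self, smul_zero, add_zero, min_eq_left hta,
            min_eq_left (hta.trans hab')]
        · rw [min_eq_right hta, c3 _ (hMF a ha' p hp), h.li, one_smul]
          have : c t = min t b := by rw [hc]; exact max_eq_right (le_min hta hab')
          rw [this]; abel
      · rw [k4 t p hp, hχ.off p hp, zero_smul, add_zero]
  obtain ⟨B, B', k1, k2, k3, k4⟩ := key N le_rfl
  refine ⟨B, B', k1, k2, fun t ht p hp => ?_, L, hL, hLU, k4⟩
  rw [k3 t ht p hp, div_self hN.ne', min_eq_left ht.2]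

end Part5

section Part6
set_option linter.unusedSectionVars false

section glue
variable {V : Type*} [NormedAddCommGroup V] [NormedSpace ℝ V]

/-- Paths of maps that are locally `CIso`, with inverse locally `CIso`. -/
lemma CIso.of_local {F G : ℝ → V → V} (hli : ∀ t p, G t (F t p) = p) (hri : ∀ t p, F t (G t p) = p)
    (hF : ∀ p, ∃ W, IsOpen W ∧ p ∈ W ∧ ∃ F' G', CIso F' G' ∧ ∀ t, ∀ q ∈ W, F t q = F' t q)
    (hG : ∀ p, ∃ W, IsOpen W ∧ p ∈ W ∧ ∃ F' G', CIso F' G' ∧ ∀ t, ∀ q ∈ W, G t q = F' t q) :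
    CIso F G := by
  have sm : ∀ {F : ℝ → V → V}, (∀ p, ∃ W, IsOpen W ∧ p ∈ W ∧ ∃ F' G', CIso F' G' ∧
      ∀ t, ∀ q ∈ W, F t q = F' t q) → ∀ t, ContDiff ℝ (⊤ : ℕ∞) (F t) := by
    intro F hF t
    rw [contDiff_iff_contDiffAt]
    intro p
    obtain ⟨W, hW, hp, F', G', h, e⟩ := hF p
    refine ((h.sm t).contDiffAt (x := p)).congr_of_eventuallyEq ?_
    filter_upwards [hW.mem_nhds hp] with q hq using e t q hq
  refine ⟨sm hF, sm hG, hli, hri, ?_, ?_⟩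
  · rw [continuous_iff_continuousAt]
    rintro ⟨t, p⟩
    obtain ⟨W, hW, hp, F', G', h, e⟩ := hF p
    refine (h.cont.continuousAt (x := (t, p))).congr ?_
    filter_upwards [(hW.preimage continuous_snd).mem_nhds (x := ((t, p) : ℝ × V)) hp] with q hq
      using (e q.1 q.2 hq).symm
  · rw [continuous_iff_continuousAt]
    rintro ⟨t, p⟩
    obtain ⟨W, hW, hp, F', G', h, e⟩ := hF p
    refine (h.dcont.continuousAt (x := (t, p))).congr ?_
    filter_upwards [(hW.preimage continuous_snd).mem_nhds (x := ((t, p) : ℝ × V)) hp] with q hq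
    have : F q.1 =ᶠ[nhds q.2] F' q.1 := by
      filter_upwards [hW.mem_nhds hq] with r hr using e q.1 r hr
    exact this.fderiv_eq.symm

open Classical in
/-- Glueing maps along a family of disjoint sets. -/
def gl (U : ℕ → Set V) (Φ : ℕ → ℝ → V → V) (t : ℝ) (p : V) : V :=
  if h : ∃ k, p ∈ U k then Φ h.choose t p else p

variable {U L : ℕ → Set V} {Φ Ψ : ℕ → ℝ → V → V}

lemma gl_mem (hd : ∀ j k p, p ∈ U j → p ∈ U k → j = k) {k : ℕ} {p : V} (hp : p ∈ U k) (t : ℝ) :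
    gl U Φ t p = Φ k t p := by
  have h : ∃ k, p ∈ U k := ⟨k, hp⟩
  rw [gl, dif_pos h, hd _ _ p h.choose_spec hp]

lemma gl_not {p : V} (hp : ∀ k, p ∉ U k) (t : ℝ) : gl U Φ t p = p := by
  rw [gl, dif_neg (by push Not; exact hp)]

lemma gl_local (hd : ∀ j k p, p ∈ U j → p ∈ U k → j = k) (hU : ∀ k, IsOpen (U k))
    (hlf : LocallyFinite U) (hL : ∀ k, IsClosed (L k)) (hLU : ∀ k, L k ⊆ U k)
    (hoff : ∀ k t p, p ∉ L k → Φ k t p = p) (p : V) :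
    ∃ W, IsOpen W ∧ p ∈ W ∧ ((∃ k, ∀ t, ∀ q ∈ W, gl U Φ t q = Φ k t q) ∨
      ∀ t, ∀ q ∈ W, gl U Φ t q = q) := by
  by_cases h : ∃ k, p ∈ U k
  · obtain ⟨k, hk⟩ := h
    exact ⟨U k, hU k, hk, Or.inl ⟨k, fun t q hq => gl_mem hd hq t⟩⟩
  · push Not at h
    refine ⟨(⋃ k, L k)ᶜ, ((hlf.subset hLU).isClosed_iUnion hL).isOpen_compl, ?_, Or.inr ?_⟩
    · simp only [mem_compl_iff, mem_iUnion, not_exists]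
      exact fun k hk => h k (hLU k hk)
    · intro t q hq
      simp only [mem_compl_iff, mem_iUnion, not_exists] at hq
      by_cases h' : ∃ k, q ∈ U k
      · obtain ⟨k, hk⟩ := h'
        rw [gl_mem hd hk, hoff k t q (hq k)]
      · push Not at h'
        exact gl_not h' t

lemma maps_supp {f g : V → V} {L : Set V} (h1 : ∀ p, g (f p) = p) (hoff : ∀ p, p ∉ L → f p = p)
    {p : V} (hp : p ∈ L) : f p ∈ L := by
  by_contra h
  have h2 := hoff _ h
  have : f p = p := by rw [← h1 (f p), h2, h1]
  rw [this] at h; exact h hp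

lemma maps_open {f g : V → V} {L U : Set V} (h1 : ∀ p, g (f p) = p) (hoff : ∀ p, p ∉ L → f p = p)
    (hLU : L ⊆ U) {p : V} (hp : p ∈ U) : f p ∈ U := by
  by_cases h : p ∈ L
  · exact hLU (maps_supp h1 hoff h)
  · rwa [hoff p h]

lemma off_inv {f g : V → V} {L : Set V} (h1 : ∀ p, g (f p) = p) (hoff : ∀ p, p ∉ L → f p = p)
    (p : V) (hp : p ∉ L) : g p = p := by
  conv_lhs => rw [← hoff p hp]
  exact h1 p

lemma gl_inv (hd : ∀ j k p, p ∈ U j → p ∈ U k → j = k) (hLU : ∀ k, L k ⊆ U k)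
    (hoff : ∀ k t p, p ∉ L k → Φ k t p = p) (hi : ∀ k t p, Ψ k t (Φ k t p) = p) (t : ℝ) (p : V) :
    gl U Ψ t (gl U Φ t p) = p := by
  by_cases h : ∃ k, p ∈ U k
  · obtain ⟨k, hk⟩ := h
    rw [gl_mem hd hk, gl_mem hd (maps_open (hi k t) (hoff k t) (hLU k) hk), hi]
  · push Not at h
    rw [gl_not h, gl_not h]

lemma CIso.glue (hd : ∀ j k p, p ∈ U j → p ∈ U k → j = k) (hU : ∀ k, IsOpen (U k))
    (hlf : LocallyFinite U) (hL : ∀ k, IsClosed (L k)) (hLU : ∀ k, L k ⊆ U k)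
    (hoff : ∀ k t p, p ∉ L k → Φ k t p = p) [CompleteSpace V]
    (h : ∀ k, CIso (Φ k) (Ψ k)) : CIso (gl U Φ) (gl U Ψ) := by
  have hoff' : ∀ k t p, p ∉ L k → Ψ k t p = p := fun k t =>
    off_inv ((h k).li t) (hoff k t)
  refine CIso.of_local (gl_inv hd hLU hoff fun k => (h k).li)
    (gl_inv hd hLU hoff' fun k => (h k).ri) (fun p => ?_) (fun p => ?_)
  · obtain ⟨W, hW, hp, ⟨k, e⟩ | e⟩ := gl_local hd hU hlf hL hLU hoff p
    · exact ⟨W, hW, hp, _, _, h k, e⟩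
    · exact ⟨W, hW, hp, _, _, CIso.id', e⟩
  · obtain ⟨W, hW, hp, ⟨k, e⟩ | e⟩ := gl_local hd hU hlf hL hLU hoff' p
    · exact ⟨W, hW, hp, _, _, (h k).symm, e⟩
    · exact ⟨W, hW, hp, _, _, CIso.id', e⟩

/-- Restricting a path of diffeomorphisms to one of the pieces preserved by it. -/
lemma CIso.restrict [CompleteSpace V] {C D : ℝ → V → V} (h : CIso C D) {U L : Set V}
    (hU : IsOpen U) (hL : IsClosed L) (hLU : L ⊆ U) (hoff : ∀ t, ∀ p ∈ U, p ∉ L → C t p = p)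
    (hm : ∀ t, ∀ p, C t p ∈ U ↔ p ∈ U) :
    ∃ C' D', CIso C' D' ∧ (∀ t, ∀ p ∈ U, C' t p = C t p) ∧ ∀ t p, p ∉ L → C' t p = p := by
  classical
  have hm' : ∀ t, ∀ p, D t p ∈ U ↔ p ∈ U := fun t p => by rw [← hm t (D t p), h.ri]
  have hoff' : ∀ t, ∀ p ∈ U, p ∉ L → D t p = p := fun t p hp hq => by
    conv_lhs => rw [← hoff t p hp hq]
    exact h.li t p
  have loc : ∀ {C D : ℝ → V → V}, CIso C D → (∀ t, ∀ p ∈ U, p ∉ L → C t p = p) → ∀ p,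
      ∃ W, IsOpen W ∧ p ∈ W ∧ ∃ F' G', CIso F' G' ∧
        ∀ t, ∀ q ∈ W, (if q ∈ U then C t q else q) = F' t q := by
    intro C D h hoff p
    by_cases hp : p ∈ U
    · exact ⟨U, hU, hp, _, _, h, fun t q hq => if_pos hq⟩
    · refine ⟨Lᶜ, hL.isOpen_compl, fun h => hp (hLU h), _, _, CIso.id', fun t q hq => ?_⟩
      by_cases hq' : q ∈ U
      · rw [if_pos hq']; exact hoff t q hq' hq
      · rw [if_neg hq']
  refine ⟨fun t p => if p ∈ U then C t p else p, fun t p => if p ∈ U then D t p else p,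
    CIso.of_local (fun t p => ?_) (fun t p => ?_) (loc h hoff) (loc h.symm hoff'),
    fun t p hp => if_pos hp, fun t p hp => ?_⟩
  · by_cases hp : p ∈ U
    · simp only [if_pos hp, if_pos ((hm t p).2 hp), h.li]
    · simp only [if_neg hp]
  · by_cases hp : p ∈ U
    · simp only [if_pos hp, if_pos ((hm' t p).2 hp), h.ri]
    · simp only [if_neg hp]
  · by_cases hq : p ∈ U
    · simp only [if_pos hq]; exact hoff t p hq hp
    · simp only [if_neg hq]

end glue

variable {n : ℕ} {U L : ℕ → Set (E n)}

lemma NullTo.glue (hd : ∀ j k p, p ∈ U j → p ∈ U k → j = k) (hU : ∀ k, IsOpen (U k))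
    (hlf : LocallyFinite U) (hL : ∀ k, IsClosed (L k)) (hLU : ∀ k, L k ⊆ U k)
    {h : ℕ → E n → E n} (hn : ∀ k, NullTo n (L k) (h k)) {H : E n → E n}
    (h1 : ∀ k, ∀ p ∈ U k, H p = h k p) (h2 : ∀ p, (∀ k, p ∉ U k) → H p = p) :
    NullTo n univ H := by
  choose g g1 g2 g3 g4 g5 g6 using hn
  have g2' := fun k t => (g2 k t).2
  choose i i1 i2 i3 using g2'
  have i6 : ∀ k t p, p ∉ L k → i k t p = p := fun k t => off_inv (i2 k t) (g6 k t)
  have sm : ∀ {Φ : ℕ → ℝ → E n → E n}, (∀ k t, ContDiff ℝ (⊤ : ℕ∞) (Φ k t)) →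
      (∀ k t p, p ∉ L k → Φ k t p = p) → ∀ t, ContDiff ℝ (⊤ : ℕ∞) (gl U Φ t) := by
    intro Φ hs ho t
    rw [contDiff_iff_contDiffAt]
    intro p
    obtain ⟨W, hW, hp, ⟨k, e⟩ | e⟩ := gl_local hd hU hlf hL hLU ho p
    · refine (hs k t).contDiffAt.congr_of_eventuallyEq ?_
      filter_upwards [hW.mem_nhds hp] with q hq using e t q hq
    · refine contDiffAt_id.congr_of_eventuallyEq ?_
      filter_upwards [hW.mem_nhds hp] with q hq using e t q hq
  refine ⟨gl U g, ?_, fun t => ⟨sm (fun k t => (g2 k t).1) g6 t, gl U i t,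
    sm i1 i6 t, gl_inv hd hLU g6 i2 t, gl_inv hd hLU i6 i3 t⟩, fun t p => ?_, fun t ht p => ?_,
    fun t ht p => ?_, fun t p hp => absurd (mem_univ p) hp⟩
  · rw [contDiff_iff_contDiffAt]
    rintro ⟨t, p⟩
    obtain ⟨W, hW, hp, ⟨k, e⟩ | e⟩ := gl_local hd hU hlf hL hLU g6 p
    · refine (g1 k).contDiffAt.congr_of_eventuallyEq ?_
      filter_upwards [(hW.preimage continuous_snd).mem_nhds (x := ((t, p) : ℝ × E n)) hp] with q hq
        using e q.1 q.2 hq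
    · refine contDiff_snd.contDiffAt.congr_of_eventuallyEq ?_
      filter_upwards [(hW.preimage continuous_snd).mem_nhds (x := ((t, p) : ℝ × E n)) hp] with q hq
        using e q.1 q.2 hq
  · by_cases hp : ∃ k, p ∈ U k
    · obtain ⟨k, hk⟩ := hp
      have e : ∀ s, gl U g s p = g k s p := gl_mem hd hk
      simp only [e]; exact g3 k t p
    · push Not at hp
      have e : ∀ s, gl U g s p = p := gl_not hp
      simp only [e, deriv_const]; exact alpha_zero _
  · by_cases hp : ∃ k, p ∈ U k
    · obtain ⟨k, hk⟩ := hp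
      rw [gl_mem hd hk, g4 k t ht]
    · push Not at hp
      exact gl_not hp t
  · by_cases hp : ∃ k, p ∈ U k
    · obtain ⟨k, hk⟩ := hp
      rw [gl_mem hd hk, g5 k t ht, h1 k p hk]
    · push Not at hp
      rw [gl_not hp t, h2 p hp]

/-- Compactly supported pieces give null-reachable maps. -/
lemma pieces_null (hn : 1 ≤ n) (hd : ∀ j k p, p ∈ U j → p ∈ U k → j = k) (hU : ∀ k, IsOpen (U k))
    (hlf : LocallyFinite U) (hL : ∀ k, IsCompact (L k)) (hLU : ∀ k, L k ⊆ U k)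
    {Φ Ψ : ℕ → ℝ → E n → E n} (h : ∀ k, CIso (Φ k) (Ψ k)) (h0 : ∀ k p, Φ k 0 p = p)
    (hoff : ∀ k t p, p ∉ L k → Φ k t p = p) {H : E n → E n}
    (h1 : ∀ k, ∀ p ∈ U k, H p = Φ k 1 p) (h2 : ∀ p, (∀ k, p ∉ U k) → H p = p) :
    NullTo n univ H := by
  have := fun k => exists_compact_between (hL k) (hU k) (hLU k)
  choose M hM hLM hMU using this
  exact NullTo.glue hd hU hlf (fun k => (hM k).isClosed) hMU
    (fun k => csupp_null hn (h k) (h0 k) (hL k).isClosed (hoff k) (hM k) (hLM k)) h1 h2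

lemma lemma_G (hn : 1 ≤ n) (hd : ∀ j k p, p ∈ U j → p ∈ U k → j = k) (hU : ∀ k, IsOpen (U k))
    (hlf : LocallyFinite U) (hL : ∀ k, IsCompact (L k)) (hLU : ∀ k, L k ⊆ U k)
    {C D : ℝ → E n → E n} (h : CIso C D) (h0 : ∀ p, C 0 p = p)
    (hoff : ∀ p, (∀ k, p ∉ L k) → ∀ t, C t p = p) : NullTo n univ (C 1) := by
  have hm1 : ∀ k t p, p ∈ U k → C t p ∈ U k := by
    intro k t p hp
    by_cases hpL : ∃ j, p ∈ L j
    · have hall : ∀ t, ∃ j, C t p ∈ U j := by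
        intro t
        by_contra hcon
        push Not at hcon
        have e1 : C t (C t p) = C t p := hoff _ (fun j hj => hcon j (hLU j hj)) t
        have e2 := h.inj t e1
        rw [e2] at hcon
        exact hcon k hp
      have hc : Continuous fun t => C t p := h.cont.comp (continuous_id.prodMk continuous_const)
      have hcl : IsClopen {t | C t p ∈ U k} := by
        refine ⟨⟨?_⟩, (hU k).preimage hc⟩
        have : {t | C t p ∈ U k}ᶜ = ⋃ j ∈ {j | j ≠ k}, {t | C t p ∈ U j} := by
          ext s
          simp only [mem_compl_iff, mem_ofPred_eq, mem_iUnion, exists_prop]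
          constructor
          · intro hs
            obtain ⟨j, hj⟩ := hall s
            exact ⟨j, fun hjk => hs (hjk ▸ hj), hj⟩
          · rintro ⟨j, hjk, hj⟩ hk
            exact hjk (hd j k _ hj hk)
        rw [this]
        exact isOpen_biUnion fun j _ => (hU j).preimage hc
      have hne : ({t | C t p ∈ U k} : Set ℝ).Nonempty := ⟨0, by
        show C 0 p ∈ U k
        rw [h0]; exact hp⟩
      have := hcl.eq_univ hne
      exact (this ▸ mem_univ t : t ∈ {t | C t p ∈ U k})
    · push Not at hpL
      rw [hoff p hpL]; exact hp
  have hm : ∀ k t p, C t p ∈ U k ↔ p ∈ U k := by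
    intro k t p
    refine ⟨fun hp => ?_, hm1 k t p⟩
    by_cases hpU : ∃ j, p ∈ U j
    · obtain ⟨j, hj⟩ := hpU
      rwa [hd k j _ hp (hm1 j t p hj)]
    · push Not at hpU
      rwa [hoff p (fun j hj => hpU j (hLU j hj))] at hp
  have := fun k => h.restrict (hU k) (hL k).isClosed (hLU k) (fun t p hp hq => hoff p (fun j hj => by
    have := hd j k p (hLU j hj) hp
    subst this; exact hq hj) t) (hm k)
  choose Φ Ψ r1 r2 r3 using this
  refine pieces_null hn hd hU hlf hL hLU r1 (fun k p => ?_) r3 (fun k p hp => (r2 k 1 p hp).symm)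
    (fun p hp => hoff p (fun j hj => hp j (hLU j hj)) 1)
  by_cases hp : p ∈ L k
  · rw [r2 k 0 p (hLU k hp), h0]
  · exact r3 k 0 p hp

end Part6

section Part7
section shells
variable {V : Type*} [NormedAddCommGroup V]

/-- Open shells. -/
def shell (V : Type*) [NormedAddCommGroup V] (S : ℕ → ℝ) (k : ℕ) : Set V :=
  {p | S k < ‖p‖ ∧ ‖p‖ < S (k + 1)}

lemma shell_open (S : ℕ → ℝ) (k : ℕ) : IsOpen (shell V S k) :=
  (isOpen_lt continuous_const continuous_norm).inter (isOpen_lt continuous_norm continuous_const)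

variable {S : ℕ → ℝ} (hS : ∀ k, S k + 1 ≤ S (k + 1))
include hS

lemma shell_mono : Monotone S := monotone_nat_of_le_succ fun k => by linarith [hS k]

lemma shell_disj (j k : ℕ) (p : V) (hj : p ∈ shell V S j) (hk : p ∈ shell V S k) : j = k := by
  rcases lt_trichotomy j k with h | h | h
  · have := shell_mono hS (Nat.succ_le_of_lt h)
    have h1 := hj.2; have h2 := hk.1
    simp only [Nat.succ_eq_add_one] at this; linarith
  · exact h
  · have := shell_mono hS (Nat.succ_le_of_lt h)
    have h1 := hk.2; have h2 := hj.1
    simp only [Nat.succ_eq_add_one] at this; linarith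

lemma shell_grow (k : ℕ) : S 0 + k ≤ S k := by
  induction k with
  | zero => simp
  | succ k ih => push_cast; linarith [hS k]

lemma shell_lf : LocallyFinite (shell V S) := by
  intro p
  refine ⟨Metric.ball p 1, Metric.ball_mem_nhds p one_pos, ?_⟩
  obtain ⟨m, hm⟩ := exists_nat_gt (‖p‖ + 1 - S 0)
  refine (finite_lt_nat m).subset ?_
  rintro k ⟨q, hq, hqp⟩
  have h1 : ‖q‖ < ‖p‖ + 1 := by
    have := norm_sub_norm_le q p
    rw [mem_ball_iff_norm] at hqp; linarith
  have h2 := shell_grow hS k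
  have h3 := hq.1
  show k < m
  have : (k : ℝ) < m := by linarith
  exact_mod_cast this

lemma shell_find {x : ℝ} (hx : S 0 ≤ x) : ∃ k, S k ≤ x ∧ x < S (k + 1) := by
  classical
  obtain ⟨m, hm⟩ := exists_nat_gt (x - S 0)
  have hex : ∃ m, x < S m := ⟨m, by linarith [shell_grow hS m]⟩
  have h1 := Nat.find_spec hex
  obtain ⟨k, hk⟩ : ∃ k, Nat.find hex = k + 1 := by
    refine Nat.exists_eq_succ_of_ne_zero fun h => ?_
    rw [h] at h1; linarith
  refine ⟨k, not_lt.1 (Nat.find_min hex (by omega)), by rw [← hk]; exact h1⟩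
end shells

section fact
variable {n : ℕ}

/-- The closed shell. -/
lemma annulus_compact (a b : ℝ) : IsCompact {p : E n | a ≤ ‖p‖ ∧ ‖p‖ ≤ b} := by
  refine (isCompact_closedBall (0 : E n) b).of_isClosed_subset ?_ ?_
  · exact (isClosed_le continuous_const continuous_norm).inter
      (isClosed_le continuous_norm continuous_const)
  · intro p hp
    simpa using hp.2

/-- The clamp to `[0,1]`. -/
def clamp (t : ℝ) : ℝ := max 0 (min t 1)

lemma clamp_cont : Continuous clamp := by unfold clamp; fun_prop
lemma clamp_mem (t : ℝ) : clamp t ∈ Icc (0:ℝ) 1 :=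
  ⟨le_max_left _ _, max_le zero_le_one (min_le_right _ _)⟩
lemma clamp_zero : clamp 0 = 0 := by simp [clamp]
lemma clamp_one : clamp 1 = 1 := by simp [clamp]
lemma clamp_id {t : ℝ} (ht : t ∈ Icc (0:ℝ) 1) : clamp t = t := by
  simp [clamp, ht.1, ht.2]

lemma bound_fn {F G : ℝ → E n → E n} (h : CIso F G) :
    ∃ b : ℝ → ℝ, (∀ x, x + 1 ≤ b x) ∧ ∀ x, ∀ t ∈ Icc (0:ℝ) 1, ∀ p, ‖p‖ ≤ x →
      ‖F t p‖ < b x ∧ ‖G t p‖ < b x := by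
  have key : ∀ x : ℝ, ∃ b : ℝ, x + 1 ≤ b ∧ ∀ t ∈ Icc (0:ℝ) 1, ∀ p, ‖p‖ ≤ x →
      ‖F t p‖ < b ∧ ‖G t p‖ < b := by
    intro x
    have hK : IsCompact (Icc (0:ℝ) 1 ×ˢ Metric.closedBall (0 : E n) x) :=
      isCompact_Icc.prod (isCompact_closedBall _ _)
    obtain ⟨b1, h1⟩ := hK.exists_bound_of_continuousOn h.cont.continuousOn
    obtain ⟨b2, h2⟩ := hK.exists_bound_of_continuousOn h.symm.cont.continuousOn
    refine ⟨max (x + 1) (max (b1 + 1) (b2 + 1)), le_max_left _ _, fun t ht p hp => ?_⟩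
    have a1 := h1 (t, p) ⟨ht, by simpa using hp⟩
    have a2 := h2 (t, p) ⟨ht, by simpa using hp⟩
    have m1 := le_max_right (x + 1) (max (b1 + 1) (b2 + 1))
    have m2 := le_max_left (b1 + 1) (b2 + 1)
    have m3 := le_max_right (b1 + 1) (b2 + 1)
    simp only at a1 a2
    exact ⟨by linarith, by linarith⟩
  choose b hb using key
  exact ⟨b, fun x => (hb x).1, fun x => (hb x).2⟩

/-- Main factorization: the end of a `C¹`-path from the identity is null-reachable. -/
lemma iso_null (hn : 1 ≤ n) {F G : ℝ → E n → E n} (h : CIso F G) (h0 : ∀ p, F 0 p = p) :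
    NullTo n univ (F 1) := by
  obtain ⟨b, hb1, hb2⟩ := bound_fn h
  let R : ℕ → ℝ := fun k => Nat.rec (-1) (fun _ x => b (b x + 1)) k
  have R0 : R 0 = -1 := rfl
  have Rs : ∀ k, R (k + 1) = b (b (R k) + 1) := fun k => rfl
  obtain ⟨r, hr⟩ : ∃ r : ℕ → ℝ, ∀ k, r k = b (R k) := ⟨_, fun _ => rfl⟩
  have Rs' : ∀ k, R (k + 1) = b (r k + 1) := fun k => by rw [Rs, hr]
  clear_value R
  have g1 : ∀ k, R k + 1 ≤ r k := fun k => by rw [hr]; exact hb1 _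
  have g2 : ∀ k, r k + 2 ≤ R (k + 1) := fun k => by rw [Rs']; linarith [hb1 (r k + 1)]
  have hR : ∀ k, R k + 1 ≤ R (k + 1) := fun k => by linarith [g1 k, g2 k]
  have hF := fun k => frag h h0 (annulus_compact (n := n) (r k) (r k + 1)) (shell_open R k)
    (fun t ht p hp => by
      refine ⟨?_, ?_⟩
      · by_contra hc
        have := (hb2 (R k) t ht (F t p) (not_lt.1 hc)).2
        rw [h.li, ← hr] at this
        linarith [hp.1]
      · rw [Rs']; exact (hb2 _ t ht p hp.2).1)
  choose B B' k1 k2 k3 L hL hLU hoff using hF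
  have hBn : NullTo n univ (gl (shell (E n) R) B 1) :=
    pieces_null hn (shell_disj hR) (shell_open R) (shell_lf hR) hL hLU k1 k2 hoff
      (fun k p hp => gl_mem (shell_disj hR) hp 1) (fun p hp => gl_not hp 1)
  have hB := CIso.glue (shell_disj hR) (shell_open R) (shell_lf hR) (fun k => (hL k).isClosed)
    hLU hoff k1
  have hC := (hB.symm.comp h).reparam clamp_cont
  let S : ℕ → ℝ := fun k => Nat.casesOn k (-1) fun j => r j + 1 / 2
  have S0 : S 0 = -1 := rfl
  have Ss : ∀ k, S (k + 1) = r k + 1 / 2 := fun k => rfl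
  clear_value S
  have hS : ∀ k, S k + 1 ≤ S (k + 1) := by
    intro k
    cases k with
    | zero => rw [S0, Ss]; linarith [g1 0]
    | succ k => rw [Ss, Ss]; linarith [g1 (k + 1), g2 k]
  have hon : ∀ j p, r j ≤ ‖p‖ → ‖p‖ ≤ r j + 1 → ∀ t ∈ Icc (0:ℝ) 1,
      gl (shell (E n) R) B' t (F t p) = p := by
    intro j p h1 h2 t ht
    have hp : p ∈ shell (E n) R j := ⟨by linarith [g1 j], by linarith [g2 j]⟩
    have : gl (shell (E n) R) B t p = F t p := by
      rw [gl_mem (shell_disj hR) hp, k3 j t ht p ⟨h1, h2⟩]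
    rw [← this]; exact hB.li t p
  have hCn : NullTo n univ (fun p => gl (shell (E n) R) B' (clamp 1) (F (clamp 1) p)) := by
    refine lemma_G (L := fun k => {p : E n | S k + 1 / 2 ≤ ‖p‖ ∧ ‖p‖ ≤ S (k + 1) - 1 / 2}) hn
      (shell_disj hS) (shell_open S) (shell_lf hS) (fun k => annulus_compact _ _)
      (fun k p hp => ⟨by linarith [hp.1], by linarith [hp.2]⟩) hC (fun p => ?_) (fun p hp t => ?_)
    · show gl (shell (E n) R) B' (clamp 0) (F (clamp 0) p) = p
      rw [clamp_zero, h0]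
      have : gl (shell (E n) R) B 0 p = p := by
        by_cases hp : ∃ k, p ∈ shell (E n) R k
        · obtain ⟨k, hk⟩ := hp
          rw [gl_mem (shell_disj hR) hk, k2]
        · push Not at hp
          exact gl_not hp 0
      conv_lhs => rw [← this]
      exact hB.li 0 p
    · show gl (shell (E n) R) B' (clamp t) (F (clamp t) p) = p
      obtain ⟨k, a1, a2⟩ := shell_find hS (x := ‖p‖) (by rw [S0]; linarith [norm_nonneg p])
      have hpk : ¬ (S k + 1 / 2 ≤ ‖p‖ ∧ ‖p‖ ≤ S (k + 1) - 1 / 2) := hp k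
      by_cases hlow : S k + 1 / 2 ≤ ‖p‖
      · have hup : S (k + 1) - 1 / 2 < ‖p‖ := not_le.1 fun h => hpk ⟨hlow, h⟩
        rw [Ss] at hup a2
        exact hon k p (by linarith) (by linarith) _ (clamp_mem t)
      · push Not at hlow
        cases k with
        | zero => rw [S0] at hlow; linarith [norm_nonneg p]
        | succ k =>
          rw [Ss] at hlow a1
          exact hon k p (by linarith) (by linarith) _ (clamp_mem t)
  have := hBn.comp hCn
  rw [clamp_one] at this
  convert this using 2 with p
  exact (hB.ri 1 (F 1 p)).symm

end fact

section smooth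
variable {V : Type*} [NormedAddCommGroup V] [NormedSpace ℝ V]

lemma path_iso {H : ℝ × V → V} (hs : ContDiff ℝ (⊤ : ℕ∞) H)
    (hd : ∀ t ∈ Icc (0:ℝ) 1, ∃ g : V → V, ContDiff ℝ (⊤ : ℕ∞) g ∧
      LeftInverse g (fun p => H (t, p)) ∧ RightInverse g (fun p => H (t, p))) :
    ∃ G, CIso (fun t p => H (clamp t, p)) G := by
  have := fun t => hd (clamp t) (clamp_mem t)
  choose G g1 g2 g3 using this
  refine ⟨G, fun t => hs.comp (contDiff_const.prodMk contDiff_id), g1, g2, g3, ?_, ?_⟩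
  · exact hs.continuous.comp ((clamp_cont.comp continuous_fst).prodMk continuous_snd)
  · have e : (fun q : ℝ × V => fderiv ℝ (fun p => H (clamp q.1, p)) q.2) =
      fun q => (fderiv ℝ H (clamp q.1, q.2)).comp (ContinuousLinearMap.inr ℝ ℝ V) := by
      funext q
      have h1 : HasFDerivAt H (fderiv ℝ H (clamp q.1, q.2)) (clamp q.1, q.2) :=
        (hs.differentiable (by simp) _).hasFDerivAt
      exact (h1.comp q.2 (hasFDerivAt_prodMk_right (clamp q.1) q.2)).fderiv
    rw [e]
    have h1 : Continuous fun q : ℝ × V => fderiv ℝ H (clamp q.1, q.2) :=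
      (hs.continuous_fderiv (by simp)).comp
        ((clamp_cont.comp continuous_fst).prodMk continuous_snd)
    exact h1.clm_comp continuous_const

lemma trans_iso (e : V) : CIso (fun t p => p + clamp t • e) (fun t p => p - clamp t • e) := by
  refine ⟨fun t => contDiff_id.add contDiff_const, fun t => contDiff_id.sub contDiff_const,
    fun t p => by simp, fun t p => by simp, ?_, ?_⟩
  · exact continuous_snd.add ((clamp_cont.comp continuous_fst).smul continuous_const)
  · have : (fun q : ℝ × V => fderiv ℝ (fun p => p + clamp q.1 • e) q.2) =
        fun _ => ContinuousLinearMap.id ℝ V := by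
      funext q
      rw [fderiv_add_const, fderiv_fun_id]
    rw [this]; exact continuous_const
end smooth

end Part7

/-- Any two diffeomorphisms of `ℝ^{2n+1}`, each connected to the identity by a
smooth path of diffeomorphisms, are connected to each other by a positive path of
diffeomorphisms. -/
theorem positive_path_between_diffeos (n : ℕ) (hn : 1 ≤ n) (f h : E n → E n)
    (hf : IsDiffeo n f) (hh : IsDiffeo n h)
    (hfconn : ConnToId n f) (hhconn : ConnToId n h) :
    ∃ g : ℝ × E n → E n, IsSmoothPath n g ∧ IsPositivePath n g ∧
      (∀ p, g (0, p) = f p) ∧ (∀ p, g (1, p) = h p) := by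
  obtain ⟨Hf, hf1, hf2, hf3⟩ := hfconn
  obtain ⟨Hh, hh1, hh2, hh3⟩ := hhconn
  obtain ⟨Gf, If⟩ := path_iso hf1.1 fun t ht => (hf1.2 t ht).2
  obtain ⟨Gh, Ih⟩ := path_iso hh1.1 fun t ht => (hh1.2 t ht).2
  obtain ⟨e, he⟩ : ∃ e : E n, e = (0, 0, 1) := ⟨_, rfl⟩
  have IF := ((trans_iso e).symm.comp Ih).comp If.symm
  have hG0 : ∀ p, Gf 0 p = p := fun p => by
    have := If.li 0 p
    simpa only [clamp_zero, hf2] using this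
  have hG1 : ∀ p, Gf 1 (f p) = p := fun p => by
    have := If.li 1 p
    simpa only [clamp_one, hf3] using this
  have N := iso_null hn IF (fun p => by simp only [clamp_zero, hG0, hh2]; simp)
  simp only [clamp_one, hh3] at N
  obtain ⟨g, g1, g2, g3, g4, g5, -⟩ := N
  have htr : ∀ t : ℝ, IsDiffeo n (fun p => p + t • e) := fun t =>
    ⟨contDiff_id.add contDiff_const, fun p => p - t • e, contDiff_id.sub contDiff_const,
      fun p => by simp, fun p => by simp⟩
  refine ⟨fun q => g q.1 (f q.2) + q.1 • e, ⟨?_, fun t _ => (htr t).comp ((g2 t).comp hf)⟩,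
    fun t _ p => ?_, fun p => ?_, fun p => ?_⟩
  · have h1 : ContDiff ℝ (⊤ : ℕ∞) (fun q : ℝ × E n => (q.1, f q.2)) :=
      contDiff_fst.prodMk (hf.1.comp contDiff_snd)
    exact (g1.comp h1).add (contDiff_fst.smul contDiff_const)
  · have h1 : ContDiff ℝ (⊤ : ℕ∞) (fun s : ℝ => g s (f p)) :=
      g1.comp (contDiff_id.prodMk contDiff_const)
    have h2 : DifferentiableAt ℝ (fun s : ℝ => g s (f p)) t := h1.differentiable (by simp) t
    have h3 : HasDerivAt (fun s : ℝ => g s (f p) + s • e)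
        (deriv (fun s => g s (f p)) t + (1 : ℝ) • e) t :=
      h2.hasDerivAt.add ((hasDerivAt_id t).smul_const e)
    have h4 := g3 t (f p)
    simp only [pathDeriv]
    rw [h3.deriv]
    simp only [α₀, he] at h4 ⊢
    simp at h4 ⊢
    linarith
  · simp [g4 0 le_rfl]
  · simp [g5 1 le_rfl, hG1]
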